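/- arXiv:1810.02839 — 2 statements merged into one kernel-verified Lean document; each statement's English description precedes it below -/
import Mathlib

section
/- There exists a constant c > 0 such that for every integer n ≥ 2, every set S of n points in the plane in general position, and any two trees T, T' ∈ 𝒯(S), the tree T can be transformed into T' by a sequence of at most c·log n simultaneous rotations (i.e., there is a sequence T = T₀, T₁, …, T_k = T' in 𝒯(S) with k ≤ c·log n in which each T_{i+1} is obtained from T_i by one simultaneous rotation). -/
open scoped Classical

noncomputable section

/-- Points in the plane. -/
abbrev Pt : Type := ℝ × ℝ

/-- The closed straight-line segment spanned by an (unordered) edge. -/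
def segOf (e : Sym2 Pt) : Set Pt :=
  Sym2.lift ⟨fun p q => segment ℝ p q, fun p q => segment_symm ℝ p q⟩ e

/-- The set of endpoints of an edge. -/
def epts (e : Sym2 Pt) : Set Pt := {p | p ∈ e}

/-- Two edges intersect in at most common endpoints (they do not cross). -/
def NoCrossPair (e f : Sym2 Pt) : Prop := segOf e ∩ segOf f ⊆ epts e ∩ epts f

/-- A set of edges is noncrossing: any two distinct edges meet in at most a common endpoint. -/
def NoCross (E : Finset (Sym2 Pt)) : Prop := ∀ e ∈ E, ∀ f ∈ E, e ≠ f → NoCrossPair e f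

/-- `E` is the edge set of a noncrossing straight-line spanning tree on the point set `S`:
all edges are nondegenerate with endpoints in `S`, pairwise noncrossing, there are
`|S| - 1` of them, and they connect all of `S`. -/
def IsPST (S : Finset Pt) (E : Finset (Sym2 Pt)) : Prop :=
  (∀ e ∈ E, ¬ e.IsDiag ∧ ∀ p ∈ e, p ∈ S) ∧
  NoCross E ∧ E.card + 1 = S.card ∧
  ∀ p ∈ S, ∀ q ∈ S, Relation.ReflTransGen (fun a b => s(a, b) ∈ E) p q

/-- `S` is in general position: no three of its points are collinear. -/
def GenPos (S : Finset Pt) : Prop :=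
  ∀ p ∈ S, ∀ q ∈ S, ∀ r ∈ S, p ≠ q → p ≠ r → q ≠ r → ¬ Collinear ℝ ({p, q, r} : Set Pt)

/-- `S` is in convex position: every point of `S` is a vertex of the convex hull of `S`. -/
def ConvexPos (S : Finset Pt) : Prop :=
  ∀ p ∈ S, p ∉ convexHull ℝ ((S : Set Pt) \ {p})

/-- The open interior of the triangle with vertices `p`, `q`, `r`. -/
def triInt (p q r : Pt) : Set Pt := interior (convexHull ℝ ({p, q, r} : Set Pt))

/-- `y` can be reached from `x` by a sequence of at most `m` `step`-operations. -/
def ReachesIn {α : Type*} (step : α → α → Prop) (m : ℕ) (x y : α) : Prop :=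
  ∃ k ≤ m, ∃ f : ℕ → α, f 0 = x ∧ f k = y ∧ ∀ i < k, step (f i) (f (i + 1))

/-- A simultaneous rotation from `E₁` to `E₂`: a bijection `π` between the removed and the
inserted edges such that each `e` shares an endpoint with `π e` and `π e` crosses no edge
of `E₁`. -/
def SimRotation (S : Finset Pt) (E₁ E₂ : Finset (Sym2 Pt)) : Prop :=
  IsPST S E₁ ∧ IsPST S E₂ ∧ ∃ π : Sym2 Pt → Sym2 Pt,
    Set.BijOn π ↑(E₁ \ E₂) ↑(E₂ \ E₁) ∧
    ∀ e ∈ E₁ \ E₂, (∃ p, p ∈ e ∧ p ∈ π e) ∧ ∀ f ∈ E₁, NoCrossPair (π e) f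

/-- An empty-triangle rotation replaces an edge `pq` by an adjacent edge `pr` such that
no edge of either tree meets the interior of the triangle `pqr`. -/
def EmptyTriRot (S : Finset Pt) (E₁ E₂ : Finset (Sym2 Pt)) : Prop :=
  IsPST S E₁ ∧ IsPST S E₂ ∧ ∃ p q r : Pt,
    E₁ \ E₂ = {s(p, q)} ∧ E₂ \ E₁ = {s(p, r)} ∧
    ∀ g ∈ E₁ ∪ E₂, Disjoint (segOf g) (triInt p q r)

/-- A simultaneous empty-triangle rotation. -/
def SimEmptyTriRot (S : Finset Pt) (E₁ E₂ : Finset (Sym2 Pt)) : Prop :=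
  IsPST S E₁ ∧ IsPST S E₂ ∧ ∃ π : Sym2 Pt → Sym2 Pt,
    Set.BijOn π ↑(E₁ \ E₂) ↑(E₂ \ E₁) ∧
    ∀ e ∈ E₁ \ E₂, ∃ p q r : Pt, e = s(p, q) ∧ π e = s(p, r) ∧
      ∀ g ∈ E₁ ∪ E₂, Disjoint (segOf g) (triInt p q r)

/-- An edge slide replaces `pq` by `pr`, where `qr` is an edge of both trees and no edge of
either tree meets the interior of the triangle `pqr`. -/
def EdgeSlide (S : Finset Pt) (E₁ E₂ : Finset (Sym2 Pt)) : Prop :=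
  IsPST S E₁ ∧ IsPST S E₂ ∧ ∃ p q r : Pt,
    E₁ \ E₂ = {s(p, q)} ∧ E₂ \ E₁ = {s(p, r)} ∧
    s(q, r) ∈ E₁ ∧ s(q, r) ∈ E₂ ∧
    ∀ g ∈ E₁ ∪ E₂, Disjoint (segOf g) (triInt p q r)

/-- A simultaneous edge slide. -/
def SimEdgeSlide (S : Finset Pt) (E₁ E₂ : Finset (Sym2 Pt)) : Prop :=
  IsPST S E₁ ∧ IsPST S E₂ ∧ ∃ π : Sym2 Pt → Sym2 Pt,
    Set.BijOn π ↑(E₁ \ E₂) ↑(E₂ \ E₁) ∧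
    ∀ e ∈ E₁ \ E₂, ∃ p q r : Pt, e = s(p, q) ∧ π e = s(p, r) ∧
      s(q, r) ∈ E₁ ∧ s(q, r) ∈ E₂ ∧
      ∀ g ∈ E₁ ∪ E₂, Disjoint (segOf g) (triInt p q r)

/-- `e` is an edge of the convex hull of `S`: it joins two distinct points of `S` and its
segment lies on the boundary of the convex hull of `S`. -/
def IsHullEdge (S : Finset Pt) (e : Sym2 Pt) : Prop :=
  ∃ u v : Pt, e = s(u, v) ∧ u ∈ S ∧ v ∈ S ∧ u ≠ v ∧
    segment ℝ u v ⊆ frontier (convexHull ℝ (S : Set Pt))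

/-- The spanning star centered at `v`. -/
def starAt (S : Finset Pt) (v : Pt) : Finset (Sym2 Pt) := (S.erase v).image (fun w => s(v, w))

/-- An edge-labeled tree: an edge set together with a labeling function. -/
abbrev LTree := Finset (Sym2 Pt) × (Sym2 Pt → ℕ)

/-- `T` is an edge-labeled noncrossing straight-line spanning tree on `S`: its edge set is in
`𝒯(S)` and its labeling is a bijection from the edges onto `{1, …, |S| - 1}`
(normalized to `0` on non-edges). -/
def IsLabeledPST (S : Finset Pt) (T : LTree) : Prop :=
  IsPST S T.1 ∧ Set.BijOn T.2 ↑T.1 (Set.Icc 1 (S.card - 1)) ∧ ∀ e, e ∉ T.1 → T.2 e = 0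

/-- A simultaneous exchange on edge-labeled trees: an arbitrary bijection between removed and
inserted edges transferring labels, all common edges keeping their labels. -/
def LabSimExchange (S : Finset Pt) (T₁ T₂ : LTree) : Prop :=
  IsLabeledPST S T₁ ∧ IsLabeledPST S T₂ ∧ ∃ π : Sym2 Pt → Sym2 Pt,
    Set.BijOn π ↑(T₁.1 \ T₂.1) ↑(T₂.1 \ T₁.1) ∧
    (∀ e ∈ T₁.1 \ T₂.1, T₂.2 (π e) = T₁.2 e) ∧
    ∀ e ∈ T₁.1 ∩ T₂.1, T₂.2 e = T₁.2 e

/-- A rotation on edge-labeled trees: the removed and inserted edges share an endpoint and do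
not cross, the label of the removed edge is transferred, and all other labels are kept. -/
def LabRotation (S : Finset Pt) (T₁ T₂ : LTree) : Prop :=
  IsLabeledPST S T₁ ∧ IsLabeledPST S T₂ ∧ ∃ e₁ e₂ : Sym2 Pt,
    T₁.1 \ T₂.1 = {e₁} ∧ T₂.1 \ T₁.1 = {e₂} ∧
    (∃ p, p ∈ e₁ ∧ p ∈ e₂) ∧ NoCrossPair e₁ e₂ ∧
    T₂.2 e₂ = T₁.2 e₁ ∧ ∀ e ∈ T₁.1 ∩ T₂.1, T₂.2 e = T₁.2 e

/-- An edge slide on edge-labeled trees, transferring the label of the slid edge. -/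
def LabEdgeSlide (S : Finset Pt) (T₁ T₂ : LTree) : Prop :=
  IsLabeledPST S T₁ ∧ IsLabeledPST S T₂ ∧ ∃ p q r : Pt,
    T₁.1 \ T₂.1 = {s(p, q)} ∧ T₂.1 \ T₁.1 = {s(p, r)} ∧
    s(q, r) ∈ T₁.1 ∧ s(q, r) ∈ T₂.1 ∧
    (∀ g ∈ T₁.1 ∪ T₂.1, Disjoint (segOf g) (triInt p q r)) ∧
    T₂.2 (s(p, r)) = T₁.2 (s(p, q)) ∧ ∀ e ∈ T₁.1 ∩ T₂.1, T₂.2 e = T₁.2 e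

/-!
Fix an extreme point `r` of `S`. It suffices to bring a tree to the star at `r` in `O(log n)` steps,
since simultaneous rotations are reversible.

Sort the other points by angle around `r` and cut them into buckets of `2 ^ k` consecutive points,
such that every edge of the current tree stays in a bucket or ends at `r`. Extend the tree to a
maximal noncrossing graph `G` of such edges. A projective chart sends `r` to infinity, so that edges
at `r` become upward vertical rays. If `v` is not adjacent to `r` in `G`, then some edge passes
above `v`, and the tangents from `v` to the points below the lowest such edge give a *hat* of `v`: a
triangle `v a b` of `G`, with `a` to the left and `b` to the right of `v` and `ab` above `v`. The
relation "the top edge of the hat of `v` is below that of `w`" is acyclic, so attaching every `v` to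
`r` or to an arbitrary one of the two tips of its hat always gives a tree. Choosing the left tips in
the left half of each bucket and the right tips in the right half yields a tree whose edges stay in
buckets of size `2 ^ (k - 1)`.

Two trees in `G`, given by parent maps towards `r`, differ by one simultaneous rotation unless some
edge is used by both with opposite orientations. Three steps therefore reach the chosen tree: first,
wherever both tips are children of `v`, one of them is reattached to the other; next, every `v`
moves to a tip that is not its child; finally, it moves to the tip chosen above.
-/

/-! ### Reversible sequences of rotations -/

namespace ReachesIn

variable {α : Type*} {step : α → α → Prop} {m n : ℕ} {x y z : α}

theorem refl (x : α) : ReachesIn step 0 x x :=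
  ⟨0, le_rfl, fun _ => x, rfl, rfl, by simp⟩

theorem single (h : step x y) : ReachesIn step 1 x y :=
  ⟨1, le_rfl, fun i => if i = 0 then x else y, by simp, by simp, by simpa using h⟩

theorem trans (hxy : ReachesIn step m x y) (hyz : ReachesIn step n y z) :
    ReachesIn step (m + n) x z := by
  obtain ⟨k, hk, f, hf0, hfk, hf⟩ := hxy
  obtain ⟨l, hl, g, hg0, hgl, hg⟩ := hyz
  refine ⟨k + l, by omega, fun i => if i ≤ k then f i else g (i - k), by simpa using hf0, ?_, ?_⟩
  · rcases Nat.eq_zero_or_pos l with rfl | hl'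
    · simp [hfk, ← hgl, hg0]
    · simp [hl'.ne', hgl]
  · intro i hi
    rcases lt_trichotomy i k with h | rfl | h
    · simpa [h.le, Nat.succ_le_of_lt h] using hf i h
    · simpa [hfk, ← hg0] using hg 0 (by omega)
    · have hsucc : i + 1 - k = i - k + 1 := by omega
      simpa [not_le_of_gt h, show ¬ i + 1 ≤ k by omega, hsucc] using hg (i - k) (by omega)

theorem symm [Std.Symm step] (h : ReachesIn step m x y) : ReachesIn step m y x := by
  obtain ⟨k, hk, f, hf0, hfk, hf⟩ := h
  refine ⟨k, hk, fun i => f (k - i), by simpa using hfk, by simpa using hf0, fun i hi => ?_⟩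
  have hsucc : k - i = k - (i + 1) + 1 := by omega
  simpa only [hsucc] using Std.Symm.symm _ _ (hf (k - (i + 1)) (by omega))

end ReachesIn

theorem NoCrossPair.symm {e f : Sym2 Pt} (h : NoCrossPair e f) : NoCrossPair f e := by
  simpa only [NoCrossPair, Set.inter_comm] using h

namespace SimRotation

variable {S : Finset Pt}

theorem symm {E₁ E₂ : Finset (Sym2 Pt)} (h : SimRotation S E₁ E₂) : SimRotation S E₂ E₁ := by
  obtain ⟨hE₁, hE₂, π, hπ, hrot⟩ := h
  have hinv := hπ.invOn_invFunOn
  have hπ' := (Set.bijOn_comm hinv).2 hπ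
  refine ⟨hE₂, hE₁, _, hπ', fun e he => ⟨?_, fun f hf => ?_⟩⟩
  · obtain ⟨p, hp, hp'⟩ := (hrot _ (hπ'.mapsTo he)).1
    exact ⟨p, by rwa [hinv.2 he] at hp', hp⟩
  · set e' := Function.invFunOn π ↑(E₁ \ E₂) e
    have he' : e' ∈ E₁ \ E₂ := hπ'.mapsTo he
    obtain ⟨heE₁, heE₂⟩ := Finset.mem_sdiff.1 he'
    by_cases hfE₁ : f ∈ E₁
    · exact hE₁.2.1 _ heE₁ _ hfE₁ fun h => heE₂ (h ▸ hf)
    · have hf' : f ∈ E₂ \ E₁ := Finset.mem_sdiff.2 ⟨hf, hfE₁⟩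
      have hcross := (hrot _ (hπ'.mapsTo hf')).2 e' heE₁
      rw [hinv.2 hf'] at hcross
      exact hcross.symm

instance : Std.Symm (SimRotation S) := ⟨fun _ _ => symm⟩

end SimRotation

/-! ### Rooted trees as parent maps -/

section Arborescence

variable {α : Type*} [DecidableEq α]

/-- The edges joining every vertex of `S` other than the root `r` to its parent under `p`. -/
def parentEdges (S : Finset α) (r : α) (p : α → α) : Finset (Sym2 α) :=
  (S.erase r).image fun v => s(v, p v)

/-- `p` is the parent map of a tree on `S` rooted at `r`; the absence of cycles is witnessed by a
rank that drops from each vertex to its parent. The value `p r` is irrelevant. -/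
structure IsArborescence (S : Finset α) (r : α) (p : α → α) : Prop where
  root_mem : r ∈ S
  parent_mem : ∀ v ∈ S.erase r, p v ∈ S
  exists_rank : ∃ ρ : α → ℕ, ∀ v ∈ S.erase r, ρ (p v) < ρ v

/-- No edge of the tree with parent map `p` occurs, with the opposite orientation, in the tree with
parent map `q`. Then passing from `p` to `q` merely turns edges around their lower endpoints. -/
def NoReversal (S : Finset α) (r : α) (p q : α → α) : Prop :=
  ∀ v ∈ S.erase r, ∀ w ∈ S.erase r, p v = w → q w ≠ v

variable {S : Finset α} {r : α} {p q : α → α}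

theorem mk_mem_parentEdges {v : α} (hv : v ∈ S.erase r) : s(v, p v) ∈ parentEdges S r p :=
  Finset.mem_image_of_mem (fun v => s(v, p v)) hv

theorem NoReversal.symm (h : NoReversal S r p q) : NoReversal S r q p :=
  fun w hw v hv hqw hpv => h v hv w hw hpv hqw

theorem NoReversal.eq_of_mk_eq_mk (h : NoReversal S r p q) {v w : α} (hv : v ∈ S.erase r)
    (hw : w ∈ S.erase r) (hvw : s(v, p v) = s(w, q w)) : v = w := by
  rcases Sym2.eq_iff.1 hvw with ⟨hvw, -⟩ | ⟨hqw, hpv⟩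
  · exact hvw
  · exact absurd hqw.symm (h v hv w hw hpv)

theorem NoReversal.mk_mem_parentEdges_iff (h : NoReversal S r p q) {v : α} (hv : v ∈ S.erase r) :
    s(v, p v) ∈ parentEdges S r q ↔ p v = q v := by
  refine ⟨fun hmem => ?_, fun hpq => hpq ▸ mk_mem_parentEdges hv⟩
  obtain ⟨w, hw, hwv⟩ := Finset.mem_image.1 hmem
  obtain rfl := h.eq_of_mk_eq_mk hv hw hwv.symm
  exact (Sym2.congr_right.1 hwv).symm

theorem NoReversal.bijOn_mk (hp : NoReversal S r p p) (hpq : NoReversal S r p q) :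
    Set.BijOn (fun v => s(v, p v)) {v | v ∈ S.erase r ∧ p v ≠ q v}
      ↑(parentEdges S r p \ parentEdges S r q) := by
  refine ⟨fun v hv => ?_, fun v hv w hw => hp.eq_of_mk_eq_mk hv.1 hw.1, fun e he => ?_⟩
  · rw [Finset.mem_coe, Finset.mem_sdiff, hpq.mk_mem_parentEdges_iff hv.1]
    exact ⟨mk_mem_parentEdges hv.1, hv.2⟩
  · obtain ⟨hep, heq⟩ := Finset.mem_sdiff.1 he
    obtain ⟨v, hv, rfl⟩ := Finset.mem_image.1 hep
    exact ⟨v, ⟨hv, mt (hpq.mk_mem_parentEdges_iff hv).2 heq⟩, rfl⟩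

namespace IsArborescence

theorem noReversal_self (hp : IsArborescence S r p) : NoReversal S r p p := by
  obtain ⟨ρ, hρ⟩ := hp.exists_rank
  rintro v hv w hw rfl hwv
  have := hρ v hv
  have := hρ (p v) hw
  rw [hwv] at this
  omega

theorem parent_ne (hp : IsArborescence S r p) {v : α} (hv : v ∈ S.erase r) : p v ≠ v := by
  obtain ⟨ρ, hρ⟩ := hp.exists_rank
  exact fun h => (hρ v hv).ne (congrArg ρ h)

theorem card_parentEdges (hp : IsArborescence S r p) : (parentEdges S r p).card + 1 = S.card := by
  have hinj : Set.InjOn (fun v => s(v, p v)) (S.erase r) :=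
    fun v hv w hw => hp.noReversal_self.eq_of_mk_eq_mk hv hw
  rw [parentEdges, Finset.card_image_of_injOn hinj, Finset.card_erase_add_one hp.root_mem]

theorem reflTransGen_root (hp : IsArborescence S r p) {v : α} (hv : v ∈ S) :
    Relation.ReflTransGen (fun a b => s(a, b) ∈ parentEdges S r p) v r := by
  obtain ⟨ρ, hρ⟩ := hp.exists_rank
  induction hn : ρ v using Nat.strong_induction_on generalizing v with
  | _ n ih =>
    rcases eq_or_ne v r with rfl | hvr
    · rfl
    · have hv' : v ∈ S.erase r := Finset.mem_erase.2 ⟨hvr, hv⟩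
      exact .head (mk_mem_parentEdges hv') (ih _ (hn ▸ hρ v hv') (hp.parent_mem v hv') rfl)

theorem reflTransGen (hp : IsArborescence S r p) {v w : α} (hv : v ∈ S) (hw : w ∈ S) :
    Relation.ReflTransGen (fun a b => s(a, b) ∈ parentEdges S r p) v w := by
  have : Std.Symm fun a b => s(a, b) ∈ parentEdges S r p :=
    ⟨fun a b h => by rwa [Sym2.eq_swap] at h⟩
  exact (hp.reflTransGen_root hv).trans (Std.Symm.symm _ _ (hp.reflTransGen_root hw))

end IsArborescence

end Arborescence

section PlaneTrees

variable {S : Finset Pt} {r : Pt} {p q : Pt → Pt} {G : Finset (Sym2 Pt)}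

theorem NoCross.mono {E : Finset (Sym2 Pt)} (hG : NoCross G) (hEG : E ⊆ G) : NoCross E :=
  fun e he f hf => hG e (hEG he) f (hEG hf)

theorem IsArborescence.isPST (hp : IsArborescence S r p) (hG : NoCross G)
    (hpG : parentEdges S r p ⊆ G) : IsPST S (parentEdges S r p) := by
  refine ⟨fun e he => ?_, hG.mono hpG, hp.card_parentEdges, fun v hv w hw => hp.reflTransGen hv hw⟩
  obtain ⟨v, hv, rfl⟩ := Finset.mem_image.1 he
  refine ⟨fun h => hp.parent_ne hv h.symm, fun w hw => ?_⟩
  rcases Sym2.mem_iff.1 hw with rfl | rfl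
  exacts [Finset.mem_of_mem_erase hv, hp.parent_mem v hv]

theorem simRotation_parentEdges (hG : NoCross G) (hp : IsArborescence S r p)
    (hq : IsArborescence S r q) (hpG : parentEdges S r p ⊆ G) (hqG : parentEdges S r q ⊆ G)
    (hpq : NoReversal S r p q) : SimRotation S (parentEdges S r p) (parentEdges S r q) := by
  have hbijp := hp.noReversal_self.bijOn_mk hpq
  have hbijq := hq.noReversal_self.bijOn_mk hpq.symm
  simp only [ne_comm (a := q _)] at hbijq
  have hinv := hbijp.invOn_invFunOn
  have hbij := hbijq.comp ((Set.bijOn_comm hinv).2 hbijp)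
  refine ⟨hp.isPST hG hpG, hq.isPST hG hqG, _, hbij, fun e he => ⟨?_, fun f hf => ?_⟩⟩
  · have hlower : s(_, p _) = e := hinv.2 he
    exact ⟨_, hlower.le (Sym2.mem_mk_left _ _), Sym2.mem_mk_left _ _⟩
  · obtain ⟨hnew, hold⟩ := Finset.mem_sdiff.1 (hbij.mapsTo he)
    exact hG _ (hqG hnew) f (hpG hf) fun h => hold (h ▸ hf)

theorem IsPST.exists_parent_closer {E : Finset (Sym2 Pt)} (hE : IsPST S E) (hr : r ∈ S) :
    ∃ ρ : Pt → ℕ, ∀ v ∈ S.erase r, ∃ w, s(v, w) ∈ E ∧ ρ w < ρ v := by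
  let T : SimpleGraph Pt := SimpleGraph.fromEdgeSet E
  have hadj : ∀ a b, s(a, b) ∈ E → T.Adj a b := fun a b h =>
    (SimpleGraph.fromEdgeSet_adj _).2 ⟨h, (hE.1 _ h).1⟩
  refine ⟨fun v => T.dist v r, fun v hv => ?_⟩
  obtain ⟨hvr, hvS⟩ := Finset.mem_erase.1 hv
  have hreach : T.Reachable v r :=
    (SimpleGraph.reachable_iff_reflTransGen v r).2 (.mono hadj _ _ (hE.2.2.2 v hvS r hr))
  obtain ⟨walk, hwalk⟩ := hreach.exists_walk_length_eq_dist
  cases walk with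
  | nil => exact absurd rfl hvr
  | cons h tail =>
    rw [SimpleGraph.Walk.length_cons] at hwalk
    exact ⟨_, ((SimpleGraph.fromEdgeSet_adj _).1 h).1,
      (SimpleGraph.dist_le tail).trans_lt (Nat.lt_of_succ_le hwalk.le)⟩

theorem IsPST.exists_isArborescence {E : Finset (Sym2 Pt)} (hE : IsPST S E) (hr : r ∈ S) :
    ∃ p, IsArborescence S r p ∧ parentEdges S r p = E := by
  obtain ⟨ρ, hρ⟩ := hE.exists_parent_closer hr
  choose! p hpE hpρ using hρ
  have hp : IsArborescence S r p :=
    ⟨hr, fun v hv => (hE.1 _ (hpE v hv)).2 _ (Sym2.mem_mk_right _ _), ρ, hpρ⟩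
  have hsub : parentEdges S r p ⊆ E := Finset.image_subset_iff.2 hpE
  refine ⟨p, hp, Finset.eq_of_subset_of_card_le hsub ?_⟩
  have := hp.card_parentEdges
  have := hE.2.2.1
  omega

end PlaneTrees

/-! ### Two candidate parents for every vertex -/

section ParentChoices

variable {α : Type*}

/-- The index of the candidate of `v` of larger rank. -/
def upperChoice (c : Bool → α → α) (σ : α → ℕ) (v : α) : Bool :=
  decide (σ (c false v) ≤ σ (c true v))

theorem rank_le_rank_upperChoice (c : Bool → α → α) (σ : α → ℕ) (v : α) (i : Bool) :
    σ (c i v) ≤ σ (c (upperChoice c σ v) v) := by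
  unfold upperChoice
  by_cases h : σ (c false v) ≤ σ (c true v)
  · cases i <;> simp [h]
  · cases i <;> simp [h, (not_le.1 h).le]

variable [DecidableEq α]

/-- Two candidate parents `c false v` and `c true v` for every non-root vertex `v`, along edges of
`G`. They either both equal the root or form a triangle of `G` with `v` that avoids the root. Since
`σ` drops along every candidate, any selection of candidates is a parent map. -/
structure ParentChoices (S : Finset α) (r : α) (G : Finset (Sym2 α)) (c : Bool → α → α)
    (σ : α → ℕ) : Prop where
  mem : ∀ v ∈ S.erase r, ∀ i, c i v ∈ S
  edge_mem : ∀ v ∈ S.erase r, ∀ i, s(v, c i v) ∈ G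
  rank_lt : ∀ v ∈ S.erase r, ∀ i, σ (c i v) < σ v
  root_or_triangle : ∀ v ∈ S.erase r, (∀ i, c i v = r) ∨
    ∀ i, c i v ≠ r ∧ c i v ≠ c (!i) v ∧ s(c i v, c (!i) v) ∈ G

/-- Both candidates of `v` are children of `v` in the tree with parent map `p`, so `v` cannot be
attached to either of them at once. -/
def IsStuck (S : Finset α) (r : α) (c : Bool → α → α) (p : α → α) (v : α) : Prop :=
  v ∈ S.erase r ∧ ∀ i, c i v ≠ r ∧ p (c i v) = v

/-- The parent map obtained from `p` by reattaching, below every stuck vertex, its candidate of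
larger rank to its other candidate. -/
def unstick (S : Finset α) (r : α) (c : Bool → α → α) (σ : α → ℕ) (p : α → α) (u : α) : α :=
  if IsStuck S r c p (p u) ∧ u = c (upperChoice c σ (p u)) (p u) then
    c (!upperChoice c σ (p u)) (p u)
  else p u

theorem IsArborescence.noReversal_unstick {S : Finset α} {r : α} {p : α → α}
    (hp : IsArborescence S r p) (c : Bool → α → α) (σ : α → ℕ) :
    NoReversal S r p (unstick S r c σ p) := by
  intro v hv w hw hpv hqw
  unfold unstick at hqw
  split_ifs at hqw with h
  · have hpv' : p v = p w := by rw [← hqw, (h.1.2 _).2]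
    exact hp.parent_ne hw (hpv'.symm.trans hpv)
  · exact hp.noReversal_self v hv w hw hpv hqw

namespace ParentChoices

variable {S : Finset α} {r : α} {G : Finset (Sym2 α)} {c : Bool → α → α} {σ : α → ℕ} {p : α → α}

theorem of_triangles {U : Finset α} {d : Bool → α → α} (hr : r ∈ S)
    (hroot : ∀ v ∈ S.erase r, v ∉ U → s(v, r) ∈ G) (hmem : ∀ v ∈ U, ∀ i, d i v ∈ S.erase r)
    (hedge : ∀ v ∈ U, ∀ i, s(v, d i v) ∈ G) (hne : ∀ v ∈ U, d false v ≠ d true v)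
    (htop : ∀ v ∈ U, s(d false v, d true v) ∈ G)
    (hσ : ∀ v ∈ U, ∀ i, d i v ∈ U → σ (d i v) < σ v) :
    ParentChoices S r G (fun i v => if v ∈ U then d i v else r)
      fun v => if v = r then 0 else if v ∈ U then σ v + 2 else 1 := by
  have hdr (v : α) (hv : v ∈ U) (i : Bool) : d i v ≠ r := Finset.ne_of_mem_erase (hmem v hv i)
  refine ⟨fun v _ i => ?_, fun v hv i => ?_, fun v hv i => ?_, fun v _ => ?_⟩ <;>
    by_cases hvU : v ∈ U
  · simpa only [hvU, if_true] using Finset.mem_of_mem_erase (hmem v hvU i)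
  · simpa only [hvU, if_false] using hr
  · simpa only [hvU, if_true] using hedge v hvU i
  · simpa only [hvU, if_false] using hroot v hv hvU
  · simp only [hvU, if_true, hdr v hvU, if_false, Finset.ne_of_mem_erase hv]
    split_ifs with hdU
    exacts [by simpa using hσ v hvU i hdU, by omega]
  · simp [hvU, Finset.ne_of_mem_erase hv]
  · refine .inr (Bool.forall_bool.2 ?_)
    have htop' : s(d true v, d false v) ∈ G := Sym2.eq_swap ▸ htop v hvU
    simp [hvU, hdr v hvU, hne v hvU, (hne v hvU).symm, htop v hvU, htop']
  · exact .inl fun i => by simp [hvU]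

theorem ne_self (hc : ParentChoices S r G c σ) {v : α} (hv : v ∈ S.erase r) (i : Bool) :
    c i v ≠ v := fun h => (hc.rank_lt v hv i).ne (congrArg σ h)

theorem mem_erase_of_isStuck (hc : ParentChoices S r G c σ) {v : α} (hv : IsStuck S r c p v)
    (i : Bool) : c i v ∈ S.erase r :=
  Finset.mem_erase.2 ⟨(hv.2 i).1, hc.mem v hv.1 i⟩

theorem triangle_of_isStuck (hc : ParentChoices S r G c σ) {v : α} (hv : IsStuck S r c p v)
    (i : Bool) : c i v ≠ c (!i) v ∧ s(c i v, c (!i) v) ∈ G :=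
  (hc.root_or_triangle v hv.1).elim (fun h => absurd (h i) (hv.2 i).1) fun h => (h i).2

theorem unstick_lower (hc : ParentChoices S r G c σ) {v : α} (hv : IsStuck S r c p v) :
    unstick S r c σ p (c (!upperChoice c σ v) v) = v := by
  rw [unstick, (hv.2 _).2, if_neg fun h => (hc.triangle_of_isStuck hv _).1 h.2.symm]

theorem exists_unstick_ne (hc : ParentChoices S r G c σ) {v : α} (hv : v ∈ S.erase r) :
    ∃ i, c i v ≠ r → unstick S r c σ p (c i v) ≠ v := by
  by_contra! hstuck
  by_cases hp : ∀ i, p (c i v) = v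
  · obtain ⟨-, h⟩ := hstuck (upperChoice c σ v)
    have hv' : IsStuck S r c p v := ⟨hv, fun i => ⟨(hstuck i).1, hp i⟩⟩
    rw [unstick, hp, if_pos ⟨hv', rfl⟩] at h
    exact hc.ne_self hv _ h
  · obtain ⟨i, hi⟩ := not_forall.1 hp
    obtain ⟨-, h⟩ := hstuck i
    by_cases hmoved : IsStuck S r c p (p (c i v)) ∧
        c i v = c (upperChoice c σ (p (c i v))) (p (c i v))
    · rw [unstick, if_pos hmoved] at h
      have hle := rank_le_rank_upperChoice c σ (p (c i v)) (!upperChoice c σ (p (c i v)))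
      rw [h, ← hmoved.2] at hle
      exact (hc.rank_lt v hv i).not_ge hle
    · exact hi (by rwa [unstick, if_neg hmoved] at h)

theorem isArborescence_unstick (hc : ParentChoices S r G c σ) (hp : IsArborescence S r p) :
    IsArborescence S r (unstick S r c σ p) := by
  obtain ⟨ρ, hρ⟩ := hp.exists_rank
  refine ⟨hp.root_mem, fun u hu => ?_, fun u => if u = r then 0 else
    2 * ρ (p u) + if unstick S r c σ p u = p u then 1 else 2, fun u hu => ?_⟩
  · unfold unstick
    split_ifs with h
    exacts [hc.mem _ h.1.1 _, hp.parent_mem u hu]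
  · have hur := Finset.ne_of_mem_erase hu
    by_cases hmoved : IsStuck S r c p (p u) ∧ u = c (upperChoice c σ (p u)) (p u)
    · have hy := hc.mem_erase_of_isStuck hmoved.1 (!upperChoice c σ (p u))
      have hpu : unstick S r c σ p u = c (!upperChoice c σ (p u)) (p u) := if_pos hmoved
      have hne := hc.ne_self hmoved.1.1 (!upperChoice c σ (p u))
      simp [hpu, hur, Finset.ne_of_mem_erase hy, hne, hc.unstick_lower hmoved.1,
        (hmoved.1.2 (!upperChoice c σ (p u))).2]
    · have hpu : unstick S r c σ p u = p u := if_neg hmoved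
      simp only [hpu, hur, if_true, if_false]
      split_ifs with hpr
      · omega
      all_goals
        have := hρ (p u) (Finset.mem_erase.2 ⟨hpr, hp.parent_mem u hu⟩)
        omega

theorem parentEdges_unstick_subset (hc : ParentChoices S r G c σ) (hp : parentEdges S r p ⊆ G) :
    parentEdges S r (unstick S r c σ p) ⊆ G := by
  refine Finset.image_subset_iff.2 fun u hu => ?_
  unfold unstick
  split_ifs with h
  · nth_rw 1 [h.2]
    exact (hc.triangle_of_isStuck h.1 _).2
  · exact hp (mk_mem_parentEdges hu)

theorem isArborescence_select (hc : ParentChoices S r G c σ) (hr : r ∈ S) (i : α → Bool) :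
    IsArborescence S r fun v => c (i v) v :=
  ⟨hr, fun v hv => hc.mem v hv _, σ, fun v hv => hc.rank_lt v hv _⟩

theorem parentEdges_select_subset (hc : ParentChoices S r G c σ) (i : α → Bool) :
    parentEdges S r (fun v => c (i v) v) ⊆ G :=
  Finset.image_subset_iff.2 fun v hv => hc.edge_mem v hv _

theorem noReversal_select (hc : ParentChoices S r G c σ) (i j : α → Bool) :
    NoReversal S r (fun v => c (i v) v) fun v => c (j v) v := by
  rintro v hv w hw rfl hwv
  have hlt : σ v < σ (c (i v) v) := by simpa only [hwv] using hc.rank_lt _ hw (j (c (i v) v))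
  exact hlt.not_gt (hc.rank_lt v hv (i v))

end ParentChoices

theorem ParentChoices.reachesIn_three {S : Finset Pt} {r : Pt} {G E : Finset (Sym2 Pt)}
    {c : Bool → Pt → Pt} {σ : Pt → ℕ} (hc : ParentChoices S r G c σ) (hr : r ∈ S) (hG : NoCross G)
    (hE : IsPST S E) (hEG : E ⊆ G) (i : Pt → Bool) :
    ReachesIn (SimRotation S) 3 E (parentEdges S r fun v => c (i v) v) := by
  obtain ⟨p, hp, rfl⟩ := hE.exists_isArborescence hr
  have hp' := hc.isArborescence_unstick hp
  have hp'G := hc.parentEdges_unstick_subset hEG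
  choose! j hj using fun v hv => hc.exists_unstick_ne (p := p) (v := v) hv
  have hjG := hc.parentEdges_select_subset j
  have hfree : NoReversal S r (fun v => c (j v) v) (unstick S r c σ p) := by
    rintro v hv w hw rfl
    exact hj v hv (Finset.ne_of_mem_erase hw)
  have unsticking := simRotation_parentEdges hG hp hp' hEG hp'G (hp.noReversal_unstick c σ)
  have attaching :=
    simRotation_parentEdges hG hp' (hc.isArborescence_select hr j) hp'G hjG hfree.symm
  have switching := simRotation_parentEdges hG (hc.isArborescence_select hr j)
    (hc.isArborescence_select hr i) hjG (hc.parentEdges_select_subset i) (hc.noReversal_select j i)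
  exact ((ReachesIn.single unsticking).trans (.single attaching)).trans (.single switching)

end ParentChoices

/-! ### Ranking an acyclic relation -/

section Elimination

variable {α : Type*} {R : α → α → Prop} {V : Finset α}

theorem exists_sink_of_elimination (hirrefl : ∀ v ∈ V, ¬ R v v)
    (helim : ∀ U ⊆ V, U.Nonempty → ∃ m ∈ U, ∀ x ∈ U, ∀ y ∈ U, R x m → R m y → R x y)
    (hV : V.Nonempty) : ∃ v ∈ V, ∀ w ∈ V, ¬ R v w := by
  induction V using Finset.strongInduction with
  | H V ih =>
    obtain ⟨m, hm, htrans⟩ := helim V subset_rfl hV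
    have hsub := Finset.erase_subset m V
    rcases (V.erase m).eq_empty_or_nonempty with hempty | hne
    · refine ⟨m, hm, fun w hw => ?_⟩
      rcases Finset.mem_insert.1 (Finset.insert_erase hm ▸ hw) with rfl | hw
      exacts [hirrefl _ hm, absurd (hempty ▸ hw) (Finset.notMem_empty w)]
    obtain ⟨t, ht, hsink⟩ := ih _ (Finset.erase_ssubset hm) (fun v hv => hirrefl v (hsub hv))
      (fun U hU => helim U (hU.trans hsub)) hne
    by_cases htm : R t m
    · refine ⟨m, hm, fun w hw hmw => ?_⟩
      have hwm : w ≠ m := fun h => hirrefl m hm (h ▸ hmw)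
      exact hsink w (Finset.mem_erase.2 ⟨hwm, hw⟩) (htrans t (hsub ht) w hw htm hmw)
    · refine ⟨t, hsub ht, fun w hw htw => ?_⟩
      rcases eq_or_ne w m with rfl | hwm
      exacts [htm htw, hsink w (Finset.mem_erase.2 ⟨hwm, hw⟩) htw]

theorem exists_rank_of_elimination (hirrefl : ∀ v ∈ V, ¬ R v v)
    (helim : ∀ U ⊆ V, U.Nonempty → ∃ m ∈ U, ∀ x ∈ U, ∀ y ∈ U, R x m → R m y → R x y) :
    ∃ σ : α → ℕ, ∀ v ∈ V, ∀ w ∈ V, R v w → σ w < σ v := by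
  induction V using Finset.strongInduction with
  | H V ih =>
    rcases V.eq_empty_or_nonempty with rfl | hV
    · simp
    obtain ⟨t, ht, hsink⟩ := exists_sink_of_elimination hirrefl helim hV
    have hsub := Finset.erase_subset t V
    obtain ⟨σ, hσ⟩ := ih _ (Finset.erase_ssubset ht) (fun v hv => hirrefl v (hsub hv))
      fun U hU => helim U (hU.trans hsub)
    refine ⟨fun v => if v = t then 0 else σ v + 1, fun v hv w hw hvw => ?_⟩
    have hvt : v ≠ t := fun h => hsink w hw (h ▸ hvw)
    rcases eq_or_ne w t with rfl | hwt
    · simp [hvt]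
    · simpa [hvt, hwt] using
        hσ v (Finset.mem_erase.2 ⟨hvt, hv⟩) w (Finset.mem_erase.2 ⟨hwt, hw⟩) hvw

end Elimination

/-! ### Affine functions and chords -/

section Affine

variable (f g : ℝ →ᵃ[ℝ] ℝ) {s t u : ℝ}

theorem affineMap_mul_sub_eq (s t u : ℝ) : f t * (u - s) = f s * (u - t) + f u * (t - s) := by
  have hf (t : ℝ) : f t = t * f.linear 1 + f 0 := by
    rw [← smul_eq_mul, ← map_smul, smul_eq_mul, mul_one]
    exact congrFun f.decomp t
  rw [hf s, hf t, hf u]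
  ring

variable {f g}

theorem affineMap_le_of_le_of_le (hs : f s ≤ g s) (hu : f u ≤ g u) (hst : s ≤ t) (htu : t ≤ u) :
    f t ≤ g t := by
  rcases (hst.trans htu).eq_or_lt with rfl | hsu
  · rwa [← le_antisymm hst htu]
  · have := affineMap_mul_sub_eq f s t u
    have := affineMap_mul_sub_eq g s t u
    refine le_of_mul_le_mul_right ?_ (sub_pos.2 hsu)
    nlinarith

theorem affineMap_lt_of_le_of_lt (hs : f s ≤ g s) (hu : f u < g u) (hst : s < t) (htu : t ≤ u) :
    f t < g t := by
  have := affineMap_mul_sub_eq f s t u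
  have := affineMap_mul_sub_eq g s t u
  refine lt_of_mul_lt_mul_right ?_ (sub_pos.2 (hst.trans_le htu)).le
  nlinarith

theorem affineMap_eq_of_eq_of_eq (hs : f s = g s) (ht : f t = g t) (hst : s ≠ t) : f = g := by
  ext u
  have := affineMap_mul_sub_eq f s u t
  have := affineMap_mul_sub_eq g s u t
  refine mul_right_cancel₀ (sub_ne_zero.2 hst.symm) ?_
  simp_all

theorem affineMap_eq_of_le_of_le_of_ge (hs : f s ≤ g s) (hu : f u ≤ g u) (ht : g t ≤ f t)
    (hst : s < t) (htu : t < u) : f = g := by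
  have hft := affineMap_mul_sub_eq f s t u
  have hgt := affineMap_mul_sub_eq g s t u
  have hus := hst.trans htu
  refine affineMap_eq_of_eq_of_eq (s := s) (t := u) ?_ ?_ hus.ne <;> nlinarith

theorem exists_mem_uIcc_affineMap_eq (hs : f s ≤ g s) (ht : g t ≤ f t) :
    ∃ u ∈ Set.uIcc s t, f u = g u :=
  isPreconnected_uIcc.intermediate_value₂ Set.left_mem_uIcc Set.right_mem_uIcc
    f.continuous_of_finiteDimensional.continuousOn g.continuous_of_finiteDimensional.continuousOn
    hs ht

end Affine

section Chord

variable {α : Type*} (x y : α → ℝ)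

/-- The affine function whose graph is the line through `(x p, y p)` and `(x q, y q)`; it is
constant if `x p = x q`. -/
def chord (p q : α) : ℝ →ᵃ[ℝ] ℝ :=
  AffineMap.const ℝ ℝ (y p) +
    ((y q - y p) / (x q - x p)) • (AffineMap.id ℝ ℝ - AffineMap.const ℝ ℝ (x p))

theorem chord_apply (p q : α) (s : ℝ) :
    chord x y p q s = y p + (y q - y p) / (x q - x p) * (s - x p) := by
  simp [chord]

@[simp]
theorem chord_apply_left (p q : α) : chord x y p q (x p) = y p := by
  simp [chord_apply]

variable {x y} {p q : α}

theorem chord_apply_right (h : x p ≠ x q) : chord x y p q (x q) = y q := by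
  rw [chord_apply, div_mul_cancel₀ _ (sub_ne_zero.2 h.symm)]
  ring

theorem chord_comm (h : x p ≠ x q) : chord x y p q = chord x y q p :=
  affineMap_eq_of_eq_of_eq (s := x p) (t := x q) (by simp [chord_apply_right h.symm])
    (by simp [chord_apply_right h]) h

theorem chord_neg_apply_neg (p q : α) (s : ℝ) : chord (-x) y p q (-s) = chord x y p q s := by
  rw [chord_apply, chord_apply, Pi.neg_apply, Pi.neg_apply, ← neg_sub', div_neg]
  ring

theorem chord_neg_swap_apply_neg (h : x p ≠ x q) (s : ℝ) :
    chord (-x) y q p (-s) = chord x y p q s := by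
  rw [chord_neg_apply_neg, chord_comm h]

end Chord

/-! ### Hats in drawings with upward rays -/

/-- A finite set of points `(x v, y v)` in the plane, no two on a vertical line and no three on a
line, together with straight segments and upward vertical rays that do not cross one another.
Segments are recorded by their endpoints and rays by their origins. -/
structure UpwardDrawing (α : Type*) where
  verts : Finset α
  x : α → ℝ
  y : α → ℝ
  segs : Set (Sym2 α)
  rays : Set α
  injOn_x : Set.InjOn x verts
  eq_or_eq_of_chord_eq : ∀ p ∈ verts, ∀ q ∈ verts, ∀ v ∈ verts, p ≠ q →
    chord x y p q (x v) = y v → v = p ∨ v = q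
  mem_verts_of_seg : ∀ e ∈ segs, ∀ v ∈ e, v ∈ verts
  segs_noncrossing : ∀ p q p' q', s(p, q) ∈ segs → s(p', q') ∈ segs →
    ∀ s ∈ Set.Ioo (x p) (x q), s ∈ Set.Ioo (x p') (x q') →
      chord x y p q s = chord x y p' q' s → p = p' ∧ q = q'
  rays_above : ∀ v ∈ rays, ∀ p q, s(p, q) ∈ segs → x v ∈ Set.Ioo (x p) (x q) →
    chord x y p q (x v) < y v

namespace UpwardDrawing

variable {α : Type*} (D : UpwardDrawing α) {p q e e' v a b : α} {s t : ℝ}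

/-- The line through the vertices `p` and `q` of the drawing. -/
abbrev line (p q : α) : ℝ →ᵃ[ℝ] ℝ := chord D.x D.y p q

/-- The segment from `p` on the left to `q` on the right crosses no segment and no ray. -/
structure IsFree (p q : α) : Prop where
  eq_of_line_eq : ∀ e e', s(e, e') ∈ D.segs → ∀ s ∈ Set.Ioo (D.x e) (D.x e'),
    s ∈ Set.Ioo (D.x p) (D.x q) → D.line p q s = D.line e e' s → p = e ∧ q = e'
  line_lt : ∀ w ∈ D.rays, D.x w ∈ Set.Ioo (D.x p) (D.x q) → D.line p q (D.x w) < D.y w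

/-- The segment `pq`, with `p` on the left, is the first one above the vertex `v`. -/
structure IsLowestOver (p q v : α) : Prop where
  vert_mem : v ∈ D.verts
  seg_mem : s(p, q) ∈ D.segs
  left_lt : D.x p < D.x v
  lt_right : D.x v < D.x q
  lt_line : D.y v < D.line p q (D.x v)
  line_le : ∀ e e', s(e, e') ∈ D.segs → D.x v ∈ Set.Ioo (D.x e) (D.x e') →
    D.y v < D.line e e' (D.x v) → D.line p q (D.x v) ≤ D.line e e' (D.x v)

/-- Seen from `v`, the vertex `a` is the steepest one among those to the left of `v`, below the
segment `pq` and not to the left of `p`. -/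
structure IsLeftTangent (p q v a : α) : Prop where
  mem : a ∈ D.verts
  left_le : D.x p ≤ D.x a
  lt : D.x a < D.x v
  le_line : D.y a ≤ D.line p q (D.x a)
  steepest : ∀ w ∈ D.verts, D.x p ≤ D.x w → D.x w < D.x v → D.y w ≤ D.line p q (D.x w) →
    D.y w ≤ D.line a v (D.x w)

theorem left_mem_of_seg (h : s(p, q) ∈ D.segs) : p ∈ D.verts :=
  D.mem_verts_of_seg _ h p (Sym2.mem_mk_left p q)

theorem right_mem_of_seg (h : s(p, q) ∈ D.segs) : q ∈ D.verts :=
  D.mem_verts_of_seg _ h q (Sym2.mem_mk_right p q)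

theorem line_le_of_lt (hpq : s(p, q) ∈ D.segs) (he : s(e, e') ∈ D.segs)
    (hs : s ∈ Set.Ioo (D.x e) (D.x e')) (hs' : s ∈ Set.Ioo (D.x p) (D.x q))
    (hlt : D.line e e' s < D.line p q s)
    (ht : t ∈ Set.Icc (D.x e) (D.x e')) (ht' : t ∈ Set.Icc (D.x p) (D.x q)) :
    D.line e e' t ≤ D.line p q t := by
  by_contra! hgt
  obtain ⟨u, hu, heq⟩ := exists_mem_uIcc_affineMap_eq hlt.le hgt.le
  have hut : u ≠ t := fun h => hgt.ne (h ▸ heq).symm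
  have inside {c d : ℝ} (hsI : s ∈ Set.Ioo c d) (htI : t ∈ Set.Icc c d) : u ∈ Set.Ioo c d := by
    rcases Set.mem_uIcc.1 hu with ⟨h₁, h₂⟩ | ⟨h₁, h₂⟩
    · exact ⟨hsI.1.trans_le h₁, (h₂.lt_of_ne hut).trans_le htI.2⟩
    · exact ⟨htI.1.trans_lt (h₁.lt_of_ne hut.symm), h₂.trans_lt hsI.2⟩
  obtain ⟨rfl, rfl⟩ :=
    D.segs_noncrossing e e' p q he hpq u (inside hs ht) (inside hs' ht') heq
  exact hlt.false

theorem line_lt_of_lt (hpq : s(p, q) ∈ D.segs) (he : s(e, e') ∈ D.segs)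
    (hs : s ∈ Set.Ioo (D.x e) (D.x e')) (hs' : s ∈ Set.Ioo (D.x p) (D.x q))
    (hlt : D.line e e' s < D.line p q s)
    (ht : t ∈ Set.Ioo (D.x e) (D.x e')) (ht' : t ∈ Set.Ioo (D.x p) (D.x q)) :
    D.line e e' t < D.line p q t := by
  refine (D.line_le_of_lt hpq he hs hs' hlt (Set.Ioo_subset_Icc_self ht)
    (Set.Ioo_subset_Icc_self ht')).lt_of_ne fun heq => ?_
  obtain ⟨rfl, rfl⟩ := D.segs_noncrossing e e' p q he hpq t ht ht' heq
  exact hlt.false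

variable {D}

theorem IsLowestOver.exists_isLeftTangent (h : D.IsLowestOver p q v) :
    ∃ a, D.IsLeftTangent p q v a := by
  let C := D.verts.filter fun w => D.x p ≤ D.x w ∧ D.x w < D.x v ∧ D.y w ≤ D.line p q (D.x w)
  have hp : p ∈ C := by simpa [C] using ⟨D.left_mem_of_seg h.seg_mem, h.left_lt⟩
  obtain ⟨a, ha, hmax⟩ := C.exists_max_image (fun w => (D.y w - D.y v) / (D.x v - D.x w)) ⟨p, hp⟩
  obtain ⟨hav, hpa, hlt, hle⟩ := Finset.mem_filter.1 ha
  refine ⟨a, hav, hpa, hlt, hle, fun w hw hpw hwv hwle => ?_⟩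
  have hslope := hmax w (Finset.mem_filter.2 ⟨hw, hpw, hwv, hwle⟩)
  rw [div_le_iff₀ (sub_pos.2 hwv)] at hslope
  rw [line, chord_comm hlt.ne, chord_apply, ← neg_sub (D.x v) (D.x a),
    ← neg_sub (D.x v) (D.x w), div_neg, neg_mul_neg]
  linarith

theorem IsLowestOver.line_lt_of_line_lt (h : D.IsLowestOver p q v)
    (he : s(e, e') ∈ D.segs) (hs : s ∈ Set.Ioo (D.x e) (D.x e')) (hps : D.x p < s)
    (hsv : s ≤ D.x v) (hlt : D.line e e' s < D.line p q s) (hev : D.x v < D.x e') :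
    D.line e e' (D.x v) < D.y v := by
  have hv : D.x v ∈ Set.Ioo (D.x e) (D.x e') := ⟨hs.1.trans_le hsv, hev⟩
  have hlow := D.line_lt_of_lt h.seg_mem he hs ⟨hps, hsv.trans_lt h.lt_right⟩ hlt hv
    ⟨h.left_lt, h.lt_right⟩
  by_contra! hle
  rcases hle.eq_or_lt with heq | hgt
  · rcases D.eq_or_eq_of_chord_eq e (D.left_mem_of_seg he) e' (D.right_mem_of_seg he) v h.vert_mem
      (fun h => (hv.1.trans hv.2).ne (congrArg D.x h)) heq.symm with rfl | rfl
    exacts [hv.1.false, hv.2.false]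
  · exact (h.line_le e e' he hv hgt).not_gt hlow

namespace IsLeftTangent

theorem line_lt (ha : D.IsLeftTangent p q v a) (h : D.IsLowestOver p q v) (has : D.x a < s)
    (hsv : s ≤ D.x v) : D.line a v s < D.line p q s :=
  affineMap_lt_of_le_of_lt (by simpa using ha.le_line)
    (by simpa [chord_apply_right ha.lt.ne] using h.lt_line) has hsv

theorem exists_le_left (ha : D.IsLeftTangent p q v a) (h : D.IsLowestOver p q v)
    (he : s(e, e') ∈ D.segs) (hs : s ∈ Set.Ioo (D.x e) (D.x e')) (hps : D.x p < s)
    (hsv : s ≤ D.x v) (hlt : D.line e e' s < D.line p q s) :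
    ∃ t < s, D.line e e' t ≤ D.line a v t := by
  have below {t : ℝ} := D.line_le_of_lt (t := t) h.seg_mem he hs
    ⟨hps, hsv.trans_lt h.lt_right⟩ hlt
  rcases le_or_gt (D.x p) (D.x e) with hpe | hep
  · have hev : D.x e < D.x v := hs.1.trans_le hsv
    have hle := below (t := D.x e) ⟨le_rfl, (hs.1.trans hs.2).le⟩ ⟨hpe, (hev.trans h.lt_right).le⟩
    rw [chord_apply_left] at hle
    exact ⟨D.x e, hs.1, by simpa using ha.steepest e (D.left_mem_of_seg he) hpe hev hle⟩
  · have hle := below (t := D.x p) ⟨hep.le, (hps.trans hs.2).le⟩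
      ⟨le_rfl, (h.left_lt.trans h.lt_right).le⟩
    refine ⟨D.x p, hps, hle.trans ?_⟩
    simpa using ha.steepest p (D.left_mem_of_seg h.seg_mem) le_rfl h.left_lt (by simp)

theorem right_le (ha : D.IsLeftTangent p q v a) (h : D.IsLowestOver p q v)
    (he : s(e, e') ∈ D.segs) (hs : s ∈ Set.Ioo (D.x e) (D.x e')) (hps : D.x p < s)
    (hsv : s ≤ D.x v) (hlt : D.line e e' s < D.line p q s) (hev : D.x e' ≤ D.x v) :
    D.y e' ≤ D.line a v (D.x e') := by
  rcases hev.eq_or_lt with heq | hev'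
  · obtain rfl := D.injOn_x (D.right_mem_of_seg he) h.vert_mem heq
    rw [chord_apply_right ha.lt.ne]
  · have hpe := hps.trans hs.2
    have hle := D.line_le_of_lt h.seg_mem he hs ⟨hps, hsv.trans_lt h.lt_right⟩ hlt
      ⟨(hs.1.trans hs.2).le, le_rfl⟩ ⟨hpe.le, (hev'.trans h.lt_right).le⟩
    rw [chord_apply_right (hs.1.trans hs.2).ne] at hle
    exact ha.steepest e' (D.right_mem_of_seg he) hpe.le hev' hle

theorem eq_of_between (ha : D.IsLeftTangent p q v a) (h : D.IsLowestOver p q v)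
    (he : s(e, e') ∈ D.segs) (hs : s ∈ Set.Ioo (D.x e) (D.x e')) (hps : D.x p < s)
    (hsv : s ≤ D.x v) (hge : D.line a v s ≤ D.line e e' s)
    (hlt : D.line e e' s < D.line p q s) : a = e ∧ v = e' := by
  obtain ⟨t, hts, ht⟩ := ha.exists_le_left h he hs hps hsv hlt
  have hav : D.line a v (D.x v) = D.y v := chord_apply_right ha.lt.ne
  rcases le_or_gt (D.x e') (D.x v) with hev | hev
  · have hle := ha.right_le h he hs hps hsv hlt hev
    rw [← chord_apply_right (y := D.y) (hs.1.trans hs.2).ne] at hle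
    have hline := affineMap_eq_of_le_of_le_of_ge ht hle hge hts hs.2
    have endpoint {w : α} (hw : w ∈ D.verts) (hwline : D.line a v (D.x w) = D.y w) :
        w = e ∨ w = e' :=
      D.eq_or_eq_of_chord_eq e (D.left_mem_of_seg he) e' (D.right_mem_of_seg he) w hw
        (fun h => (hs.1.trans hs.2).ne (congrArg D.x h)) ((DFunLike.congr_fun hline _).trans hwline)
    obtain rfl := (endpoint h.vert_mem hav).resolve_left
      (by rintro rfl; exact (hs.1.trans_le hsv).false)
    exact ⟨(endpoint ha.mem (by simp)).resolve_right (by rintro rfl; exact ha.lt.false), rfl⟩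
  · have hlt' := h.line_lt_of_line_lt he hs hps hsv hlt hev
    rw [← hav] at hlt'
    exact absurd hge (affineMap_lt_of_le_of_lt ht hlt' hts hsv).not_ge

theorem isFree (ha : D.IsLeftTangent p q v a) (h : D.IsLowestOver p q v) : D.IsFree a v where
  eq_of_line_eq _ _ he _ hs hsa heq :=
    ha.eq_of_between h he hs (ha.left_le.trans_lt hsa.1) hsa.2.le heq.le
      (heq ▸ ha.line_lt h hsa.1 hsa.2.le)
  line_lt w hw hwa := (ha.line_lt h hwa.1 hwa.2.le).trans
    (D.rays_above w hw p q h.seg_mem ⟨ha.left_le.trans_lt hwa.1, hwa.2.trans h.lt_right⟩)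

end IsLeftTangent

theorem IsLeftTangent.apply_eq_of_crossing (ha : D.IsLeftTangent p q v a)
    (h : D.IsLowestOver p q v) {f : ℝ →ᵃ[ℝ] ℝ} (hfa : f (D.x a) = D.y a)
    (hfv : D.y v < f (D.x v)) (he : s(e, e') ∈ D.segs) (hs : s ∈ Set.Ioo (D.x e) (D.x e'))
    (has : D.x a < s) (hsv : s ≤ D.x v) (hfe : f s = D.line e e' s)
    (hle : f s ≤ D.line p q s) : f s = D.line p q s := by
  have hlt : D.line a v s < f s := affineMap_lt_of_le_of_lt (by simp [hfa])
    (by rwa [chord_apply_right ha.lt.ne]) has hsv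
  by_contra hne
  obtain ⟨rfl, rfl⟩ := ha.eq_of_between h he hs (ha.left_le.trans_lt has) hsv (hfe ▸ hlt.le)
    (hfe ▸ hle.lt_of_ne hne)
  exact hlt.ne' hfe

variable (D) in
/-- The reflection of a drawing in a vertical line. -/
def mirror : UpwardDrawing α where
  verts := D.verts
  x := -D.x
  y := D.y
  segs := D.segs
  rays := D.rays
  injOn_x _ hp _ hq h := D.injOn_x hp hq (neg_injective h)
  eq_or_eq_of_chord_eq p hp q hq v hv hpq h :=
    D.eq_or_eq_of_chord_eq p hp q hq v hv hpq (by rwa [← chord_neg_apply_neg])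
  mem_verts_of_seg := D.mem_verts_of_seg
  segs_noncrossing p q p' q' hpq hpq' := neg_surjective.forall.2 fun t ht ht' heq => by
    have ht : t ∈ Set.Ioo (D.x q) (D.x p) := (Set.neg_mem_Ioo_iff.1 ht).imp (by simp) (by simp)
    have ht' : t ∈ Set.Ioo (D.x q') (D.x p') := (Set.neg_mem_Ioo_iff.1 ht').imp (by simp) (by simp)
    rw [chord_neg_swap_apply_neg (ht.1.trans ht.2).ne,
      chord_neg_swap_apply_neg (ht'.1.trans ht'.2).ne] at heq
    rw [Sym2.eq_swap] at hpq hpq'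
    exact (D.segs_noncrossing q p q' p' hpq hpq' t ht ht' heq).symm
  rays_above v hv p q hpq hvpq := by
    have hvpq : D.x v ∈ Set.Ioo (D.x q) (D.x p) :=
      ⟨neg_lt_neg_iff.1 hvpq.2, neg_lt_neg_iff.1 hvpq.1⟩
    rw [Sym2.eq_swap] at hpq
    simpa [chord_neg_swap_apply_neg (hvpq.1.trans hvpq.2).ne] using D.rays_above v hv q p hpq hvpq

theorem mirror_line_neg (h : D.x p ≠ D.x q) (s : ℝ) : D.mirror.line q p (-s) = D.line p q s :=
  chord_neg_swap_apply_neg h s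

theorem mirror_line_x (h : D.x p ≠ D.x q) (v : α) :
    D.mirror.line q p (D.mirror.x v) = D.line p q (D.x v) :=
  mirror_line_neg h (D.x v)

theorem neg_mem_Ioo_mirror : -s ∈ Set.Ioo (D.mirror.x p) (D.mirror.x q) ↔
    s ∈ Set.Ioo (D.x q) (D.x p) := by
  simp [mirror, and_comm]

theorem mirror_x_lt : D.mirror.x p < D.mirror.x q ↔ D.x q < D.x p := neg_lt_neg_iff

theorem mirror_x_le : D.mirror.x p ≤ D.mirror.x q ↔ D.x q ≤ D.x p := neg_le_neg_iff

theorem IsLowestOver.mirror (h : D.IsLowestOver p q v) : D.mirror.IsLowestOver q p v where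
  vert_mem := h.vert_mem
  seg_mem := Sym2.eq_swap ▸ h.seg_mem
  left_lt := mirror_x_lt.2 h.lt_right
  lt_right := mirror_x_lt.2 h.left_lt
  lt_line := by
    rw [mirror_line_x (h.left_lt.trans h.lt_right).ne]
    exact h.lt_line
  line_le e e' he hv := by
    have hv := neg_mem_Ioo_mirror.1 hv
    rw [mirror_line_x (h.left_lt.trans h.lt_right).ne, mirror_line_x (hv.1.trans hv.2).ne]
    exact h.line_le e' e (Sym2.eq_swap ▸ he) hv

theorem IsFree.of_mirror (h : D.mirror.IsFree q p) : D.IsFree p q where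
  eq_of_line_eq e e' he s hs hs' heq := by
    rw [← mirror_line_neg (hs.1.trans hs.2).ne, ← mirror_line_neg (hs'.1.trans hs'.2).ne] at heq
    exact (h.eq_of_line_eq e' e (Sym2.eq_swap ▸ he) _ (neg_mem_Ioo_mirror.2 hs)
      (neg_mem_Ioo_mirror.2 hs') heq).symm
  line_lt w hw hw' := by
    rw [← mirror_line_x (hw'.1.trans hw'.2).ne]
    exact h.line_lt w hw (neg_mem_Ioo_mirror.2 hw')

/-- Vertices `a` and `b` to the left and right of `v` such that `v` lies below the segment `ab` and
all sides of the triangle `avb` are free. -/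
structure IsHat (D : UpwardDrawing α) (v a b : α) : Prop where
  left_mem : a ∈ D.verts
  right_mem : b ∈ D.verts
  left_lt : D.x a < D.x v
  lt_right : D.x v < D.x b
  lt_line : D.y v < D.line a b (D.x v)
  isFree_left : D.IsFree a v
  isFree_right : D.IsFree v b
  isFree_top : D.IsFree a b

namespace IsLowestOver

theorem le_line_right (h : D.IsLowestOver p q v) (hb : D.mirror.IsLeftTangent q p v b) :
    D.y b ≤ D.line p q (D.x b) := by
  rw [← mirror_line_x (h.left_lt.trans h.lt_right).ne]
  exact hb.le_line

theorem lt_line_of_tangents (h : D.IsLowestOver p q v) (ha : D.IsLeftTangent p q v a)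
    (hb : D.mirror.IsLeftTangent q p v b) : D.y v < D.line a b (D.x v) := by
  have hvb : D.x v < D.x b := mirror_x_lt.1 hb.lt
  have hbq : D.x b ≤ D.x q := mirror_x_le.1 hb.left_le
  have hav : D.line a v (D.x v) = D.y v := chord_apply_right ha.lt.ne
  have hleft : D.line p q (D.x p) ≤ D.line a v (D.x p) := by
    simpa using ha.steepest p (D.left_mem_of_seg h.seg_mem) le_rfl h.left_lt (by simp)
  have hright : D.line p q (D.x q) ≤ D.line v b (D.x q) := by
    rw [← mirror_line_x hvb.ne, chord_apply_right (h.left_lt.trans h.lt_right).ne]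
    exact hb.steepest q (D.right_mem_of_seg h.seg_mem) le_rfl (mirror_x_lt.2 h.lt_right) (by simp)
  have hq : D.line a v (D.x q) < D.line p q (D.x q) := by
    by_contra! hle
    have hv := affineMap_le_of_le_of_le hleft hle h.left_lt.le h.lt_right.le
    exact hv.not_gt (hav ▸ h.lt_line)
  have hb' : D.line a v (D.x b) < D.line a b (D.x b) := by
    rw [chord_apply_right (ha.lt.trans hvb).ne, ← chord_apply_right (y := D.y) hvb.ne]
    exact affineMap_lt_of_le_of_lt (by simp [hav]) (hq.trans_le hright) hvb hbq
  exact hav ▸ affineMap_lt_of_le_of_lt (by simp) hb' ha.lt hvb.le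

theorem line_le_of_tangents (h : D.IsLowestOver p q v) (ha : D.IsLeftTangent p q v a)
    (hb : D.mirror.IsLeftTangent q p v b) (hs : s ∈ Set.Icc (D.x a) (D.x b)) :
    D.line a b s ≤ D.line p q s := by
  have hvb : D.x v < D.x b := mirror_x_lt.1 hb.lt
  refine affineMap_le_of_le_of_le (by simpa using ha.le_line) ?_ hs.1 hs.2
  rw [chord_apply_right (ha.lt.trans hvb).ne]
  exact h.le_line_right hb

theorem line_eq_of_crossing (h : D.IsLowestOver p q v) (ha : D.IsLeftTangent p q v a)
    (hb : D.mirror.IsLeftTangent q p v b) (he : s(e, e') ∈ D.segs)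
    (hs : s ∈ Set.Ioo (D.x e) (D.x e')) (hs' : s ∈ Set.Ioo (D.x a) (D.x b))
    (heq : D.line a b s = D.line e e' s) : D.line a b s = D.line p q s := by
  have hlt := h.lt_line_of_tangents ha hb
  have hle := h.line_le_of_tangents ha hb (Set.Ioo_subset_Icc_self hs')
  rcases le_total s (D.x v) with hsv | hvs
  · exact ha.apply_eq_of_crossing h (by simp) hlt he hs hs'.1 hsv heq hle
  · have hab := (hs'.1.trans hs'.2).ne
    rw [← mirror_line_neg hab, ← mirror_line_neg (hs.1.trans hs.2).ne] at heq
    rw [← mirror_line_x hab] at hlt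
    rw [← mirror_line_neg hab, ← mirror_line_neg (h.left_lt.trans h.lt_right).ne] at hle ⊢
    exact hb.apply_eq_of_crossing h.mirror (by simp) hlt (Sym2.eq_swap ▸ he)
      (neg_mem_Ioo_mirror.2 hs) (neg_lt_neg hs'.2) (neg_le_neg hvs) heq hle

theorem isFree_of_tangents (h : D.IsLowestOver p q v) (ha : D.IsLeftTangent p q v a)
    (hb : D.mirror.IsLeftTangent q p v b) : D.IsFree a b := by
  have hvb : D.x v < D.x b := mirror_x_lt.1 hb.lt
  have hab := ha.lt.trans hvb
  have hle {s : ℝ} := h.line_le_of_tangents ha hb (s := s)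
  have span {s : ℝ} (hs : s ∈ Set.Ioo (D.x a) (D.x b)) : s ∈ Set.Ioo (D.x p) (D.x q) :=
    ⟨ha.left_le.trans_lt hs.1, hs.2.trans_le (mirror_x_le.1 hb.left_le)⟩
  refine ⟨fun e e' he s hs hs' heq => ?_, fun w hw hw' =>
    (hle (Set.Ioo_subset_Icc_self hw')).trans_lt (D.rays_above w hw p q h.seg_mem (span hw'))⟩
  have htouch := h.line_eq_of_crossing ha hb he hs hs' heq
  have hline := affineMap_eq_of_le_of_le_of_ge (hle ⟨le_rfl, hab.le⟩) (hle ⟨hab.le, le_rfl⟩)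
    htouch.ge hs'.1 hs'.2
  obtain ⟨rfl, rfl⟩ := D.segs_noncrossing p q e e' h.seg_mem he s (span hs') hs
    (htouch.symm.trans heq)
  have endpoint {w : α} (hw : w ∈ D.verts) (hwline : D.line a b (D.x w) = D.y w) :
      w = p ∨ w = q :=
    D.eq_or_eq_of_chord_eq p (D.left_mem_of_seg he) q (D.right_mem_of_seg he) w hw
      (fun h => (hs.1.trans hs.2).ne (congrArg D.x h))
      ((DFunLike.congr_fun hline _).symm.trans hwline)
  exact ⟨(endpoint ha.mem (by simp)).resolve_right
      (by rintro rfl; exact (ha.lt.trans h.lt_right).false),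
    (endpoint hb.mem (chord_apply_right hab.ne)).resolve_left
      (by rintro rfl; exact (h.left_lt.trans hvb).false)⟩

theorem exists_isHat (h : D.IsLowestOver p q v) :
    ∃ a b, D.IsHat v a b ∧ D.x p ≤ D.x a ∧ D.x b ≤ D.x q := by
  obtain ⟨a, ha⟩ := h.exists_isLeftTangent
  obtain ⟨b, hb⟩ := h.mirror.exists_isLeftTangent
  exact ⟨a, b, ⟨ha.mem, hb.mem, ha.lt, mirror_x_lt.1 hb.lt, h.lt_line_of_tangents ha hb,
    ha.isFree h, (hb.isFree h.mirror).of_mirror, h.isFree_of_tangents ha hb⟩, ha.left_le,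
    mirror_x_le.1 hb.left_le⟩

end IsLowestOver

theorem exists_isLowestOver (hv : v ∈ D.verts) (hpq : s(p, q) ∈ D.segs)
    (hspan : D.x v ∈ Set.Ioo (D.x p) (D.x q)) (hlt : D.y v < D.line p q (D.x v)) :
    ∃ p q, D.IsLowestOver p q v := by
  let above := (D.verts ×ˢ D.verts).filter fun e => s(e.1, e.2) ∈ D.segs ∧
    D.x v ∈ Set.Ioo (D.x e.1) (D.x e.2) ∧ D.y v < D.line e.1 e.2 (D.x v)
  have habove {e e' : α} : (e, e') ∈ above ↔ s(e, e') ∈ D.segs ∧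
      D.x v ∈ Set.Ioo (D.x e) (D.x e') ∧ D.y v < D.line e e' (D.x v) := by
    simp only [above, Finset.mem_filter, Finset.mem_product, and_iff_right_iff_imp]
    exact fun h => ⟨D.left_mem_of_seg h.1, D.right_mem_of_seg h.1⟩
  obtain ⟨⟨p, q⟩, hmem, hmin⟩ := above.exists_min_image (fun e => D.line e.1 e.2 (D.x v))
    ⟨(p, q), habove.2 ⟨hpq, hspan, hlt⟩⟩
  obtain ⟨hseg, hspan, hlt⟩ := habove.1 hmem
  exact ⟨p, q, hv, hseg, hspan.1, hspan.2, hlt,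
    fun e e' he hspan' hlt' => hmin (e, e') (habove.2 ⟨he, hspan', hlt'⟩)⟩

variable (D) in
/-- The segment `pq` passes below the segment `p'q'` somewhere; both are oriented to the right. -/
def PassesBelow (p q p' q' : α) : Prop :=
  ∃ s ∈ Set.Ioo (D.x p) (D.x q), s ∈ Set.Ioo (D.x p') (D.x q') ∧ D.line p q s < D.line p' q' s

theorem not_passesBelow_self : ¬ D.PassesBelow p q p q :=
  fun ⟨_, _, _, h⟩ => h.false

theorem PassesBelow.trans {p₁ q₁ p₂ q₂ : α} (h₁ : D.PassesBelow p₁ q₁ p q)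
    (h₂ : D.PassesBelow p q p₂ q₂) (hpq : s(p, q) ∈ D.segs) (hpq₁ : s(p₁, q₁) ∈ D.segs)
    (hpq₂ : s(p₂, q₂) ∈ D.segs) (hq₁ : D.x q ≤ D.x q₁) (hq₂ : D.x q ≤ D.x q₂) :
    D.PassesBelow p₁ q₁ p₂ q₂ := by
  obtain ⟨s₁, hs₁, hs₁', hlt₁⟩ := h₁
  obtain ⟨s₂, hs₂, hs₂', hlt₂⟩ := h₂
  have hq : max s₁ s₂ < D.x q := max_lt hs₁'.2 hs₂.2
  have h : max s₁ s₂ ∈ Set.Ioo (D.x p) (D.x q) := ⟨lt_max_of_lt_left hs₁'.1, hq⟩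
  have h₁ : max s₁ s₂ ∈ Set.Ioo (D.x p₁) (D.x q₁) := ⟨lt_max_of_lt_left hs₁.1, hq.trans_le hq₁⟩
  have h₂ : max s₁ s₂ ∈ Set.Ioo (D.x p₂) (D.x q₂) := ⟨lt_max_of_lt_right hs₂'.1, hq.trans_le hq₂⟩
  exact ⟨max s₁ s₂, h₁, h₂, (D.line_lt_of_lt hpq hpq₁ hs₁ hs₁' hlt₁ h₁ h).trans
    (D.line_lt_of_lt hpq₂ hpq hs₂ hs₂' hlt₂ h h₂)⟩

theorem IsHat.passesBelow_left {a' b' : α} (h : D.IsHat v a b) (h' : D.IsHat a a' b') :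
    D.PassesBelow a b a' b' := by
  have hab : D.x a < D.x b := h.left_lt.trans h.lt_right
  have hlt : ∀ᶠ s in nhdsWithin (D.x a) (Set.Ioi (D.x a)), D.line a b s < D.line a' b' s :=
    (((D.line a b).continuous_of_finiteDimensional.tendsto _).eventually_lt
      ((D.line a' b').continuous_of_finiteDimensional.tendsto _)
      (by simpa using h'.lt_line)).filter_mono nhdsWithin_le_nhds
  obtain ⟨s, ⟨hs, hsb⟩, hsb'⟩ :=
    ((hlt.and (Ioo_mem_nhdsGT hab)).and (Ioo_mem_nhdsGT h'.lt_right)).exists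
  exact ⟨s, hsb, ⟨h'.left_lt.trans hsb'.1, hsb'.2⟩, hs⟩

theorem IsHat.passesBelow_right {a' b' : α} (h : D.IsHat v a b) (h' : D.IsHat b a' b') :
    D.PassesBelow a b a' b' := by
  have hab : D.x a < D.x b := h.left_lt.trans h.lt_right
  have hlt : ∀ᶠ s in nhdsWithin (D.x b) (Set.Iio (D.x b)), D.line a b s < D.line a' b' s :=
    (((D.line a b).continuous_of_finiteDimensional.tendsto _).eventually_lt
      ((D.line a' b').continuous_of_finiteDimensional.tendsto _)
      (by simpa [chord_apply_right hab.ne] using h'.lt_line)).filter_mono nhdsWithin_le_nhds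
  obtain ⟨s, ⟨hs, has⟩, has'⟩ :=
    ((hlt.and (Ioo_mem_nhdsLT hab)).and (Ioo_mem_nhdsLT h'.left_lt)).exists
  exact ⟨s, has, ⟨has'.1, has'.2.trans h'.lt_right⟩, hs⟩

theorem exists_rank_of_isHat {U : Finset α} {c : Bool → α → α}
    (hhat : ∀ v ∈ U, D.IsHat v (c false v) (c true v))
    (hseg : ∀ v ∈ U, s(c false v, c true v) ∈ D.segs) :
    ∃ σ : α → ℕ, ∀ v ∈ U, ∀ i, c i v ∈ U → σ (c i v) < σ v := by
  obtain ⟨σ, hσ⟩ := exists_rank_of_elimination (V := U)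
    (R := fun v w => D.PassesBelow (c false v) (c true v) (c false w) (c true w))
    (fun _ _ => not_passesBelow_self) fun U' hU' hne => by
      obtain ⟨m, hm, hmin⟩ := U'.exists_min_image (fun v => D.x (c true v)) hne
      exact ⟨m, hm, fun v hv w hw hvm hmw => hvm.trans hmw (hseg m (hU' hm)) (hseg v (hU' hv))
        (hseg w (hU' hw)) (hmin v hv) (hmin w hw)⟩
  refine ⟨σ, fun v hv i hi => hσ v hv _ hi ?_⟩
  cases i
  · exact (hhat v hv).passesBelow_left (hhat _ hi)
  · exact (hhat v hv).passesBelow_right (hhat _ hi)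

end UpwardDrawing

/-! ### The projective chart at an extreme point -/

section Chart

variable (r c : Pt)

/-- The signed height of `z` over the line through `r` orthogonal to `c`, in units of `‖c‖⁻¹`. -/
def height (z : Pt) : ℝ := c.1 * (z.1 - r.1) + c.2 * (z.2 - r.2)

/-- The signed offset of `z` from the line through `r` in direction `c`, in units of `‖c‖⁻¹`. -/
def offset (z : Pt) : ℝ := c.1 * (z.2 - r.2) - c.2 * (z.1 - r.1)

/-- The first coordinate of the projective chart of the half plane `0 < height` that sends `r` to
the point at infinity in the vertical direction. It maps segments to segments, except that segments
ending at `r` become upward vertical rays. -/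
def chartX (z : Pt) : ℝ := offset r c z / height r c z

/-- The second coordinate of the chart whose first coordinate is `chartX`. -/
def chartY (z : Pt) : ℝ := (height r c z)⁻¹

variable {r c} {p q v w z : Pt} {s y : ℝ}

@[simp]
theorem height_self : height r c r = 0 := by simp [height]

@[simp]
theorem offset_self : offset r c r = 0 := by simp [offset]

theorem height_lineMap (t : ℝ) : height r c (AffineMap.lineMap p q t) =
    (1 - t) * height r c p + t * height r c q := by
  simp only [height, AffineMap.lineMap_apply, vsub_eq_sub, vadd_eq_add, Prod.fst_add, Prod.snd_add,
    Prod.smul_fst, Prod.smul_snd, Prod.fst_sub, Prod.snd_sub, smul_eq_mul]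
  ring

theorem offset_lineMap (t : ℝ) : offset r c (AffineMap.lineMap p q t) =
    (1 - t) * offset r c p + t * offset r c q := by
  simp only [offset, AffineMap.lineMap_apply, vsub_eq_sub, vadd_eq_add, Prod.fst_add, Prod.snd_add,
    Prod.smul_fst, Prod.smul_snd, Prod.fst_sub, Prod.snd_sub, smul_eq_mul]
  ring

theorem norm_sq_pos_of_height_pos (hz : 0 < height r c z) : 0 < c.1 ^ 2 + c.2 ^ 2 := by
  have hc : c.1 ≠ 0 ∨ c.2 ≠ 0 := by
    by_contra! hc
    simp [height, hc] at hz
  rcases hc with hc | hc <;> positivity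

theorem eq_of_height_eq_of_offset_eq (hz : 0 < height r c z) (hh : height r c z = height r c w)
    (ho : offset r c z = offset r c w) : z = w := by
  have hc := norm_sq_pos_of_height_pos hz
  unfold height at hh
  unfold offset at ho
  ext <;> refine mul_left_cancel₀ hc.ne' ?_
  · linear_combination c.1 * hh - c.2 * ho
  · linear_combination c.2 * hh + c.1 * ho

theorem offset_eq_chartX_mul_height (hz : height r c z ≠ 0) :
    offset r c z = chartX r c z * height r c z := by
  rw [chartX, div_mul_cancel₀ _ hz]

theorem chartY_pos (hz : 0 < height r c z) : 0 < chartY r c z := inv_pos.2 hz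

theorem exists_chart_eq (hp : 0 < height r c p) (s : ℝ) (hy : 0 < y) :
    ∃ z, 0 < height r c z ∧ chartX r c z = s ∧ chartY r c z = y := by
  have hc := (norm_sq_pos_of_height_pos hp).ne'
  let z : Pt := (r.1 + (c.1 - s * c.2) / (y * (c.1 ^ 2 + c.2 ^ 2)),
    r.2 + (c.2 + s * c.1) / (y * (c.1 ^ 2 + c.2 ^ 2)))
  have hh : height r c z = y⁻¹ := by
    simp only [height, z]
    field_simp
    ring
  have ho : offset r c z = s * y⁻¹ := by
    simp only [offset, z]
    field_simp
    ring
  refine ⟨z, hh ▸ inv_pos.2 hy, ?_, by rw [chartY, hh, inv_inv]⟩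
  rw [chartX, hh, ho, mul_div_cancel_right₀ _ (inv_pos.2 hy).ne']

theorem eq_of_chartX_eq_of_chartY_eq (hz : 0 < height r c z) (hw : 0 < height r c w)
    (hX : chartX r c z = chartX r c w) (hY : chartY r c z = chartY r c w) : z = w := by
  have hh : height r c z = height r c w := inv_injective hY
  refine eq_of_height_eq_of_offset_eq hz hh ?_
  rw [offset_eq_chartX_mul_height hz.ne', offset_eq_chartX_mul_height hw.ne', hX, hh]

theorem eq_lineMap_root_of_chartX_eq (hz : 0 < height r c z) (hv : 0 < height r c v)
    (hX : chartX r c z = chartX r c v) :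
    z = AffineMap.lineMap r v (height r c z / height r c v) := by
  refine eq_of_height_eq_of_offset_eq hz ?_ ?_
  · rw [height_lineMap, height_self]
    field_simp
    ring
  · rw [offset_lineMap, offset_self, offset_eq_chartX_mul_height hz.ne',
      offset_eq_chartX_mul_height hv.ne', hX]
    field_simp
    ring

theorem mem_segment_root_iff (hv : 0 < height r c v) : z ∈ segment ℝ v r ↔
    z = r ∨ 0 < height r c z ∧ chartX r c z = chartX r c v ∧ chartY r c v ≤ chartY r c z := by
  rw [segment_symm, segment_eq_image_lineMap]
  constructor
  · rintro ⟨t, ht, rfl⟩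
    rcases ht.1.eq_or_lt with rfl | ht0
    · simp
    have hh : height r c (AffineMap.lineMap r v t) = t * height r c v := by simp [height_lineMap]
    have hpos := mul_pos ht0 hv
    refine .inr ⟨hh ▸ hpos, ?_, ?_⟩
    · rw [chartX, chartX, hh, offset_lineMap, offset_self, mul_zero, zero_add,
        mul_div_mul_left _ _ ht0.ne']
    · rw [chartY, chartY, hh]
      exact inv_anti₀ hpos (mul_le_of_le_one_left hv.le ht.2)
  · rintro (rfl | ⟨hz, hX, hY⟩)
    · exact ⟨0, by simp⟩
    · refine ⟨_, ⟨by positivity, ?_⟩, (eq_lineMap_root_of_chartX_eq hz hv hX).symm⟩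
      exact (div_le_one hv).2 ((inv_le_inv₀ hv hz).1 hY)

theorem chart_lineMap_mem_chord (hp : 0 < height r c p) (hq : 0 < height r c q)
    (hX : chartX r c p < chartX r c q) {t : ℝ} (ht : t ∈ Set.Icc (0 : ℝ) 1) :
    0 < height r c (AffineMap.lineMap p q t) ∧
    chartX r c (AffineMap.lineMap p q t) ∈ Set.Icc (chartX r c p) (chartX r c q) ∧
    chartY r c (AffineMap.lineMap p q t) =
      chord (chartX r c) (chartY r c) p q (chartX r c (AffineMap.lineMap p q t)) := by
  obtain ⟨ht0, ht1⟩ := ht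
  set h := height r c (AffineMap.lineMap p q t) with hh
  rw [height_lineMap] at hh
  have hpos : 0 < h := by
    rcases ht0.eq_or_lt with rfl | ht0
    · simpa [hh]
    · have := mul_pos ht0 hq
      have := mul_nonneg (sub_nonneg.2 ht1) hp.le
      linarith
  have hx : chartX r c (AffineMap.lineMap p q t) * h =
      (1 - t) * (chartX r c p * height r c p) + t * (chartX r c q * height r c q) := by
    rw [← offset_eq_chartX_mul_height hpos.ne', offset_lineMap,
      offset_eq_chartX_mul_height hp.ne', offset_eq_chartX_mul_height hq.ne']
  have hleft : (chartX r c (AffineMap.lineMap p q t) - chartX r c p) * h =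
      t * height r c q * (chartX r c q - chartX r c p) := by
    linear_combination hx - chartX r c p * hh
  have hright : (chartX r c q - chartX r c (AffineMap.lineMap p q t)) * h =
      (1 - t) * height r c p * (chartX r c q - chartX r c p) := by
    linear_combination chartX r c q * hh - hx
  have hX' := sub_pos.2 hX
  refine ⟨hpos, ⟨sub_nonneg.1 ?_, sub_nonneg.1 ?_⟩, ?_⟩
  · exact nonneg_of_mul_nonneg_left (hleft ▸ by positivity) hpos
  · have := sub_nonneg.2 ht1
    exact nonneg_of_mul_nonneg_left (hright ▸ by positivity) hpos
  · rw [chord_apply, eq_div_of_mul_eq hpos.ne' hleft]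
    have hY : chartY r c (AffineMap.lineMap p q t) = h⁻¹ := rfl
    rw [hY, chartY, chartY]
    field_simp
    linear_combination -hh

theorem eq_lineMap_of_chartY_eq_chord (hp : 0 < height r c p) (hq : 0 < height r c q)
    (hz : 0 < height r c z) (hX : chartX r c p ≠ chartX r c q)
    (hY : chartY r c z = chord (chartX r c) (chartY r c) p q (chartX r c z)) :
    z = AffineMap.lineMap p q ((chartX r c z - chartX r c p) / (chartX r c q - chartX r c p) *
      (height r c z / height r c q)) := by
  set β := (chartX r c z - chartX r c p) / (chartX r c q - chartX r c p) with hβ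
  have hβ' : β * (chartX r c q - chartX r c p) = chartX r c z - chartX r c p :=
    div_mul_cancel₀ _ (sub_ne_zero.2 hX.symm)
  have hharm : height r c p * height r c q =
      height r c z * ((1 - β) * height r c q + β * height r c p) := by
    rw [chord_apply, div_mul_eq_mul_div, mul_div_assoc, ← hβ] at hY
    unfold chartY at hY
    field_simp at hY
    linear_combination hY
  have hh : height r c z =
      (1 - β * (height r c z / height r c q)) * height r c p +
        β * (height r c z / height r c q) * height r c q := by
    field_simp
    linear_combination -hharm
  refine eq_of_height_eq_of_offset_eq hz (by rw [height_lineMap, ← hh]) ?_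
  have hcancel : height r c z / height r c q * height r c q = height r c z :=
    div_mul_cancel₀ _ hq.ne'
  rw [offset_lineMap, offset_eq_chartX_mul_height hz.ne', offset_eq_chartX_mul_height hp.ne',
    offset_eq_chartX_mul_height hq.ne']
  linear_combination
    chartX r c p * hh - height r c z * hβ' - (chartX r c q - chartX r c p) * β * hcancel

theorem mem_segment_iff_chartY_eq_chord (hp : 0 < height r c p) (hq : 0 < height r c q)
    (hX : chartX r c p < chartX r c q) : z ∈ segment ℝ p q ↔ 0 < height r c z ∧
      chartX r c z ∈ Set.Icc (chartX r c p) (chartX r c q) ∧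
      chartY r c z = chord (chartX r c) (chartY r c) p q (chartX r c z) := by
  rw [segment_eq_image_lineMap]
  constructor
  · rintro ⟨t, ht, rfl⟩
    exact chart_lineMap_mem_chord hp hq hX ht
  · rintro ⟨hz, hXz, hY⟩
    have heq := eq_lineMap_of_chartY_eq_chord hp hq hz hX.ne hY
    refine ⟨_, ⟨?_, ?_⟩, heq.symm⟩
    · have := sub_nonneg.2 hXz.1
      have := sub_pos.2 hX
      positivity
    · set β := (chartX r c z - chartX r c p) / (chartX r c q - chartX r c p)
      have hβ1 : β ≤ 1 := (div_le_one (sub_pos.2 hX)).2 (sub_le_sub_right hXz.2 _)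
      have hh := congrArg (height r c) heq
      rw [height_lineMap, mul_assoc β, div_mul_cancel₀ _ hq.ne'] at hh
      have : 0 ≤ (1 - β) * height r c z := mul_nonneg (sub_nonneg.2 hβ1) hz.le
      exact sub_nonneg.1 (nonneg_of_mul_nonneg_left (by linarith) hp)

theorem chord_chart_pos (hp : 0 < height r c p) (hq : 0 < height r c q)
    (hs : s ∈ Set.Ioo (chartX r c p) (chartX r c q)) :
    0 < chord (chartX r c) (chartY r c) p q s := by
  have hX := (hs.1.trans hs.2).ne
  refine affineMap_lt_of_le_of_lt (f := AffineMap.const ℝ ℝ 0) (u := chartX r c q) ?_ ?_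
    hs.1 hs.2.le
  · simpa using (chartY_pos hp).le
  · simpa [chord_apply_right hX] using chartY_pos hq

theorem chord_ne_of_noCrossPair {p' q' : Pt} (hp : 0 < height r c p) (hq : 0 < height r c q)
    (hp' : 0 < height r c p') (hq' : 0 < height r c q') (h : NoCrossPair s(p, q) s(p', q'))
    (hs : s ∈ Set.Ioo (chartX r c p) (chartX r c q))
    (hs' : s ∈ Set.Ioo (chartX r c p') (chartX r c q')) :
    chord (chartX r c) (chartY r c) p q s ≠ chord (chartX r c) (chartY r c) p' q' s := by
  intro heq
  obtain ⟨z, hz, rfl, hY⟩ := exists_chart_eq hp s (chord_chart_pos hp hq hs)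
  have hmem : z ∈ segment ℝ p q :=
    (mem_segment_iff_chartY_eq_chord hp hq (hs.1.trans hs.2)).2 ⟨hz, Set.Ioo_subset_Icc_self hs, hY⟩
  have hmem' : z ∈ segment ℝ p' q' := (mem_segment_iff_chartY_eq_chord hp' hq'
    (hs'.1.trans hs'.2)).2 ⟨hz, Set.Ioo_subset_Icc_self hs', hY.trans heq⟩
  rcases Sym2.mem_iff.1 (h ⟨hmem, hmem'⟩).1 with rfl | rfl
  exacts [hs.1.false, hs.2.false]

variable {S : Finset Pt}

/-- The point `r` of `S` is extreme, as witnessed by the direction `c`: all other points of `S` lie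
strictly above the line through `r` orthogonal to `c`. -/
structure IsApex (S : Finset Pt) (r c : Pt) : Prop where
  mem : r ∈ S
  height_pos : ∀ v ∈ S.erase r, 0 < height r c v

-- A point of `S` farthest from the origin is extreme.
theorem exists_isApex (hS : S.Nonempty) : ∃ r c, IsApex S r c := by
  obtain ⟨r, hr, hmax⟩ := S.exists_max_image (fun z : Pt => z.1 ^ 2 + z.2 ^ 2) hS
  refine ⟨r, -r, hr, fun v hv => ?_⟩
  obtain ⟨hne, hvS⟩ := Finset.mem_erase.1 hv
  have hdist : 0 < (v.1 - r.1) ^ 2 + (v.2 - r.2) ^ 2 := by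
    have : v.1 - r.1 ≠ 0 ∨ v.2 - r.2 ≠ 0 := by
      simpa only [sub_ne_zero, ne_eq, Prod.ext_iff, not_and_or] using hne
    rcases this with h | h <;> positivity
  have := hmax v hvS
  simp only [height, Prod.fst_neg, Prod.snd_neg]
  linarith

theorem GenPos.eq_or_eq_of_mem_affineSpan (hS : GenPos S) (hp : p ∈ S) (hq : q ∈ S) (hv : v ∈ S)
    (hpq : p ≠ q) (h : v ∈ line[ℝ, p, q]) : v = p ∨ v = q := by
  by_contra! hne
  exact hS v hv p hp q hq hne.1 hne.2 hpq (collinear_insert_of_mem_affineSpan_pair h)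

namespace IsApex

variable {p' q' : Pt}

theorem injOn_chartX (hr : IsApex S r c) (hS : GenPos S) : Set.InjOn (chartX r c) (S.erase r) := by
  intro v hv w hw hX
  have hv' := Finset.mem_erase.1 hv
  have hw' := Finset.mem_erase.1 hw
  have hline := AffineMap.lineMap_mem_affineSpan_pair (height r c v / height r c w) r w
  rw [← eq_lineMap_root_of_chartX_eq (hr.height_pos v hv) (hr.height_pos w hw) hX] at hline
  exact (hS.eq_or_eq_of_mem_affineSpan hr.mem hw'.2 hv'.2 hw'.1.symm hline).resolve_left hv'.1

theorem eq_or_eq_of_chord_eq (hr : IsApex S r c) (hS : GenPos S) (hp : p ∈ S.erase r)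
    (hq : q ∈ S.erase r) (hv : v ∈ S.erase r) (hpq : p ≠ q)
    (h : chord (chartX r c) (chartY r c) p q (chartX r c v) = chartY r c v) : v = p ∨ v = q := by
  refine hS.eq_or_eq_of_mem_affineSpan (Finset.mem_of_mem_erase hp) (Finset.mem_of_mem_erase hq)
    (Finset.mem_of_mem_erase hv) hpq ?_
  rw [eq_lineMap_of_chartY_eq_chord (hr.height_pos p hp) (hr.height_pos q hq) (hr.height_pos v hv)
    ((hr.injOn_chartX hS).ne hp hq hpq) h.symm]
  exact AffineMap.lineMap_mem_affineSpan_pair _ _ _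

theorem mem_mk_of_mem_segment_of_notMem_Ioo (hr : IsApex S r c) (hp : p ∈ S.erase r)
    (hq : q ∈ S.erase r) (hX : chartX r c p < chartX r c q) (hz : z ∈ segment ℝ p q)
    (hXz : chartX r c z ∉ Set.Ioo (chartX r c p) (chartX r c q)) : z ∈ s(p, q) := by
  have hp := hr.height_pos p hp
  have hq := hr.height_pos q hq
  obtain ⟨hz, hIcc, hY⟩ := (mem_segment_iff_chartY_eq_chord hp hq hX).1 hz
  refine Sym2.mem_iff.2 ?_
  rcases hIcc.1.eq_or_lt with hl | hl
  · rw [← hl, chord_apply_left] at hY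
    exact .inl (eq_of_chartX_eq_of_chartY_eq hz hp hl.symm hY)
  · have hu : chartX r c z = chartX r c q :=
      hIcc.2.eq_of_not_lt fun h => hXz ⟨hl, h⟩
    rw [hu, chord_apply_right hX.ne] at hY
    exact .inr (eq_of_chartX_eq_of_chartY_eq hz hq hu hY)

theorem mem_mk_of_mem_segment (hr : IsApex S r c) (hS : GenPos S) (hp : p ∈ S.erase r)
    (hq : q ∈ S.erase r) (hX : chartX r c p < chartX r c q) (hz : z ∈ S.erase r)
    (hseg : z ∈ segment ℝ p q) : z ∈ s(p, q) := by
  obtain ⟨-, -, hY⟩ :=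
    (mem_segment_iff_chartY_eq_chord (hr.height_pos p hp) (hr.height_pos q hq) hX).1 hseg
  exact Sym2.mem_iff.2 (hr.eq_or_eq_of_chord_eq hS hp hq hz (ne_of_apply_ne _ hX.ne) hY.symm)

theorem noCrossPair_of_chord_ne (hr : IsApex S r c) (hS : GenPos S) (hp : p ∈ S.erase r)
    (hq : q ∈ S.erase r) (hp' : p' ∈ S.erase r) (hq' : q' ∈ S.erase r)
    (hX : chartX r c p < chartX r c q) (hX' : chartX r c p' < chartX r c q')
    (h : ∀ s ∈ Set.Ioo (chartX r c p) (chartX r c q), s ∈ Set.Ioo (chartX r c p') (chartX r c q') →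
      chord (chartX r c) (chartY r c) p q s ≠ chord (chartX r c) (chartY r c) p' q' s) :
    NoCrossPair s(p, q) s(p', q') := by
  rintro z ⟨hz : z ∈ segment ℝ p q, hz' : z ∈ segment ℝ p' q'⟩
  suffices hz₂ : z ∈ s(p, q) ∨ z ∈ s(p', q') by
    have hmem (hz₂ : z ∈ s(p, q)) : z ∈ S.erase r := by
      rcases Sym2.mem_iff.1 hz₂ with rfl | rfl <;> assumption
    have hmem' (hz₂ : z ∈ s(p', q')) : z ∈ S.erase r := by
      rcases Sym2.mem_iff.1 hz₂ with rfl | rfl <;> assumption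
    rcases hz₂ with hz₂ | hz₂
    · exact ⟨hz₂, hr.mem_mk_of_mem_segment hS hp' hq' hX' (hmem hz₂) hz'⟩
    · exact ⟨hr.mem_mk_of_mem_segment hS hp hq hX (hmem' hz₂) hz, hz₂⟩
  by_cases hs : chartX r c z ∈ Set.Ioo (chartX r c p) (chartX r c q)
  · refine .inr (hr.mem_mk_of_mem_segment_of_notMem_Ioo hp' hq' hX' hz' fun hs' => h _ hs hs' ?_)
    rw [← ((mem_segment_iff_chartY_eq_chord (hr.height_pos p hp) (hr.height_pos q hq) hX).1 hz).2.2,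
      ← ((mem_segment_iff_chartY_eq_chord (hr.height_pos p' hp') (hr.height_pos q' hq')
        hX').1 hz').2.2]
  · exact .inl (hr.mem_mk_of_mem_segment_of_notMem_Ioo hp hq hX hz hs)

theorem noCrossPair_root_iff (hr : IsApex S r c) (hS : GenPos S) (hv : v ∈ S.erase r)
    (hp : p ∈ S.erase r) (hq : q ∈ S.erase r) (hX : chartX r c p < chartX r c q) :
    NoCrossPair s(v, r) s(p, q) ↔ (chartX r c v ∈ Set.Ioo (chartX r c p) (chartX r c q) →
      chord (chartX r c) (chartY r c) p q (chartX r c v) < chartY r c v) := by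
  have hv₀ := hr.height_pos v hv
  have hp₀ := hr.height_pos p hp
  have hq₀ := hr.height_pos q hq
  constructor
  · intro h hs
    by_contra! hle
    obtain ⟨z, hz, hXz, hY⟩ := exists_chart_eq hv₀ (chartX r c v) (chord_chart_pos hp₀ hq₀ hs)
    have hmem : z ∈ segment ℝ v r := (mem_segment_root_iff hv₀).2 (.inr ⟨hz, hXz, hY ▸ hle⟩)
    have hmem' : z ∈ segment ℝ p q := (mem_segment_iff_chartY_eq_chord hp₀ hq₀ hX).2
      ⟨hz, Set.Ioo_subset_Icc_self (hXz ▸ hs), hXz ▸ hY⟩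
    rw [← hXz] at hs
    rcases Sym2.mem_iff.1 (h ⟨hmem, hmem'⟩).2 with rfl | rfl
    exacts [hs.1.false, hs.2.false]
  · rintro h z ⟨hz : z ∈ segment ℝ v r, hz' : z ∈ segment ℝ p q⟩
    obtain ⟨hz₀, -, hY⟩ := (mem_segment_iff_chartY_eq_chord hp₀ hq₀ hX).1 hz'
    obtain rfl | ⟨-, hXz, hle⟩ := (mem_segment_root_iff hv₀).1 hz
    · simp at hz₀
    rw [hY, hXz] at hle
    have hzpq := hr.mem_mk_of_mem_segment_of_notMem_Ioo hp hq hX hz'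
      fun hs => (h (hXz ▸ hs)).not_ge hle
    have hzv : z = v := by
      refine hr.injOn_chartX hS ?_ hv hXz
      rcases Sym2.mem_iff.1 hzpq with rfl | rfl <;> assumption
    exact ⟨Sym2.mem_iff.2 (.inl hzv), hzpq⟩

theorem noCrossPair_root_root (hr : IsApex S r c) (hS : GenPos S) (hv : v ∈ S.erase r)
    (hw : w ∈ S.erase r) (hne : v ≠ w) : NoCrossPair s(v, r) s(w, r) := by
  rintro z ⟨hz : z ∈ segment ℝ v r, hz' : z ∈ segment ℝ w r⟩
  obtain rfl | ⟨-, hXv, -⟩ := (mem_segment_root_iff (hr.height_pos v hv)).1 hz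
  · exact ⟨Sym2.mem_mk_right _ _, Sym2.mem_mk_right _ _⟩
  obtain rfl | ⟨-, hXw, -⟩ := (mem_segment_root_iff (hr.height_pos w hw)).1 hz'
  · exact ⟨Sym2.mem_mk_right _ _, Sym2.mem_mk_right _ _⟩
  exact absurd (hr.injOn_chartX hS hv hw (hXv.symm.trans hXw)) hne

end IsApex

end Chart

/-! ### Maximal graphs within buckets -/

section BucketGraph

variable {S : Finset Pt} {r c p q v w : Pt} {b : Pt → ℕ} {e : Sym2 Pt} {E G : Finset (Sym2 Pt)}

/-- An edge that joins two distinct points of `S` and does not leave a bucket, where the points are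
sorted into buckets by `b` and the root `r` belongs to every bucket. -/
structure IsBucketEdge (S : Finset Pt) (r : Pt) (b : Pt → ℕ) (e : Sym2 Pt) : Prop where
  not_isDiag : ¬ e.IsDiag
  mem : ∀ v ∈ e, v ∈ S
  bucket_eq : ∀ v ∈ e, ∀ w ∈ e, v ≠ r → w ≠ r → b v = b w

/-- A noncrossing graph on `S` all of whose edges stay within the buckets given by `b`. -/
structure IsBucketGraph (S : Finset Pt) (r : Pt) (b : Pt → ℕ) (G : Finset (Sym2 Pt)) : Prop where
  noCross : NoCross G
  isBucketEdge : ∀ e ∈ G, IsBucketEdge S r b e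

theorem isBucketEdge_mk (hp : p ∈ S) (hq : q ∈ S) (hne : p ≠ q)
    (hb : p ≠ r → q ≠ r → b p = b q) : IsBucketEdge S r b s(p, q) where
  not_isDiag := hne
  mem v hv := by rcases Sym2.mem_iff.1 hv with rfl | rfl <;> assumption
  bucket_eq v hv w hw hvr hwr := by
    rcases Sym2.mem_iff.1 hv with rfl | rfl <;> rcases Sym2.mem_iff.1 hw with rfl | rfl
    exacts [rfl, hb hvr hwr, (hb hwr hvr).symm, rfl]

theorem isBucketEdge_mk_root (hr : r ∈ S) (hv : v ∈ S.erase r) : IsBucketEdge S r b s(v, r) :=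
  isBucketEdge_mk (Finset.mem_of_mem_erase hv) hr (Finset.ne_of_mem_erase hv)
    fun _ h => absurd rfl h

theorem IsBucketEdge.mem_erase (he : IsBucketEdge S r b e) (hre : r ∉ e) (hv : v ∈ e) :
    v ∈ S.erase r :=
  Finset.mem_erase.2 ⟨fun h => hre (h ▸ hv), he.mem v hv⟩

theorem IsBucketGraph.exists_maximal_superset (hE : IsBucketGraph S r b E) :
    ∃ G, E ⊆ G ∧ Maximal (IsBucketGraph S r b) G := by
  have hfin : {G | IsBucketGraph S r b G}.Finite :=
    S.sym2.powerset.finite_toSet.subset fun G hG => Finset.mem_powerset.2 fun e he =>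
      Finset.mem_sym2_iff.2 (hG.isBucketEdge e he).mem
  exact hfin.exists_le_maximal hE

theorem mem_of_maximal_isBucketGraph (hG : Maximal (IsBucketGraph S r b) G)
    (he : IsBucketEdge S r b e) (hcross : ∀ f ∈ G, f ≠ e → NoCrossPair e f) : e ∈ G := by
  suffices hins : IsBucketGraph S r b (insert e G) from
    hG.le_of_ge hins (Finset.subset_insert e G) (Finset.mem_insert_self e G)
  refine ⟨fun f hf g hg hne => ?_, fun f hf => ?_⟩
  · rcases Finset.mem_insert.1 hf with rfl | hfG <;> rcases Finset.mem_insert.1 hg with rfl | hgG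
    · exact absurd rfl hne
    · exact hcross g hgG hne.symm
    · exact (hcross f hfG hne).symm
    · exact hG.prop.noCross f hfG g hgG hne
  · rcases Finset.mem_insert.1 hf with rfl | hf
    exacts [he, hG.prop.isBucketEdge f hf]

theorem IsBucketEdge.eq_mk_root_or_eq_mk_lt (he : IsBucketEdge S r b e) (hr : IsApex S r c)
    (hS : GenPos S) : (∃ v ∈ S.erase r, e = s(v, r)) ∨
      r ∉ e ∧ ∃ p ∈ S.erase r, ∃ q ∈ S.erase r, chartX r c p < chartX r c q ∧ e = s(p, q) := by
  by_cases hre : r ∈ e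
  · obtain ⟨v, rfl⟩ := hre
    exact .inl ⟨v, Finset.mem_erase.2 ⟨fun h => he.not_isDiag h.symm,
      he.mem v (Sym2.mem_mk_right _ _)⟩, Sym2.eq_swap⟩
  · refine .inr ⟨hre, ?_⟩
    induction e using Sym2.ind with | _ p q
    have hp := he.mem_erase hre (Sym2.mem_mk_left p q)
    have hq := he.mem_erase hre (Sym2.mem_mk_right p q)
    rcases ((hr.injOn_chartX hS).ne hp hq he.not_isDiag).lt_or_gt with h | h
    exacts [⟨p, hp, q, hq, h, rfl⟩, ⟨q, hq, p, hp, h, Sym2.eq_swap⟩]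

/-- The image of `G` under the chart at `r`, which turns the edges at `r` into upward rays. -/
def IsBucketGraph.drawing (hG : IsBucketGraph S r b G) (hr : IsApex S r c) (hS : GenPos S) :
    UpwardDrawing Pt where
  verts := S.erase r
  x := chartX r c
  y := chartY r c
  segs := {e | e ∈ G ∧ r ∉ e}
  rays := {v | v ≠ r ∧ s(v, r) ∈ G}
  injOn_x := hr.injOn_chartX hS
  eq_or_eq_of_chord_eq _ hp _ hq _ hv := hr.eq_or_eq_of_chord_eq hS hp hq hv
  mem_verts_of_seg e he _ hv := (hG.isBucketEdge e he.1).mem_erase he.2 hv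
  segs_noncrossing p q p' q' he he' s hs hs' heq := by
    have hpos {e : Sym2 Pt} (he : e ∈ G ∧ r ∉ e) {v : Pt} (hv : v ∈ e) : 0 < height r c v :=
      hr.height_pos v ((hG.isBucketEdge e he.1).mem_erase he.2 hv)
    by_cases hee' : s(p, q) = s(p', q')
    · refine (Sym2.eq_iff.1 hee').resolve_right ?_
      rintro ⟨rfl, rfl⟩
      exact (hs.1.trans hs.2).not_gt (hs'.1.trans hs'.2)
    · exact absurd heq (chord_ne_of_noCrossPair (hpos he (Sym2.mem_mk_left _ _))
        (hpos he (Sym2.mem_mk_right _ _)) (hpos he' (Sym2.mem_mk_left _ _))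
        (hpos he' (Sym2.mem_mk_right _ _)) (hG.noCross _ he.1 _ he'.1 hee') hs hs')
  rays_above v hv p q he hs := by
    have hmem {w : Pt} (hw : w ∈ s(p, q)) : w ∈ S.erase r :=
      (hG.isBucketEdge _ he.1).mem_erase he.2 hw
    have hv' : v ∈ S.erase r :=
      Finset.mem_erase.2 ⟨hv.1, (hG.isBucketEdge _ hv.2).mem v (Sym2.mem_mk_left _ _)⟩
    exact (hr.noCrossPair_root_iff hS hv' (hmem (Sym2.mem_mk_left _ _))
      (hmem (Sym2.mem_mk_right _ _)) (hs.1.trans hs.2)).1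
        (hG.noCross _ hv.2 _ he.1 fun h => he.2 (h ▸ Sym2.mem_mk_right _ _)) hs

theorem mem_of_isFree (hG : Maximal (IsBucketGraph S r b) G) (hr : IsApex S r c) (hS : GenPos S)
    (hp : p ∈ S.erase r) (hq : q ∈ S.erase r) (hX : chartX r c p < chartX r c q) (hb : b p = b q)
    (hfree : (hG.prop.drawing hr hS).IsFree p q) : s(p, q) ∈ G := by
  refine mem_of_maximal_isBucketGraph hG (isBucketEdge_mk (Finset.mem_of_mem_erase hp)
    (Finset.mem_of_mem_erase hq) (ne_of_apply_ne _ hX.ne) fun _ _ => hb) fun f hf hne => ?_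
  obtain ⟨v, hv, rfl⟩ | ⟨hrf, p', hp', q', hq', hX', rfl⟩ :=
    (hG.prop.isBucketEdge f hf).eq_mk_root_or_eq_mk_lt hr hS
  · exact ((hr.noCrossPair_root_iff hS hv hp hq hX).2
      (hfree.line_lt v ⟨Finset.ne_of_mem_erase hv, hf⟩)).symm
  · refine hr.noCrossPair_of_chord_ne hS hp hq hp' hq' hX hX' fun s hs hs' heq => hne ?_
    obtain ⟨rfl, rfl⟩ := hfree.eq_of_line_eq p' q' ⟨hf, hrf⟩ s hs' hs heq
    rfl

theorem exists_isLowestOver_of_mk_root_notMem (hG : Maximal (IsBucketGraph S r b) G)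
    (hr : IsApex S r c) (hS : GenPos S) (hv : v ∈ S.erase r) (hvr : s(v, r) ∉ G) :
    ∃ p q, (hG.prop.drawing hr hS).IsLowestOver p q v := by
  obtain ⟨f, hf, hne, hcross⟩ : ∃ f ∈ G, f ≠ s(v, r) ∧ ¬ NoCrossPair s(v, r) f := by
    by_contra! h
    exact hvr (mem_of_maximal_isBucketGraph hG (isBucketEdge_mk_root hr.mem hv) h)
  obtain ⟨w, hw, rfl⟩ | ⟨hrf, p, hp, q, hq, hX, rfl⟩ :=
    (hG.prop.isBucketEdge f hf).eq_mk_root_or_eq_mk_lt hr hS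
  · exact absurd (hr.noCrossPair_root_root hS hv hw fun h => hne (h ▸ rfl)) hcross
  · rw [hr.noCrossPair_root_iff hS hv hp hq hX] at hcross
    push Not at hcross
    obtain ⟨hs, hle⟩ := hcross
    refine (hG.prop.drawing hr hS).exists_isLowestOver hv ⟨hf, hrf⟩ hs (hle.lt_of_ne fun heq => ?_)
    rcases hr.eq_or_eq_of_chord_eq hS hp hq hv (ne_of_apply_ne _ hX.ne) heq.symm with rfl | rfl
    exacts [hs.1.false, hs.2.false]

theorem exists_hat_of_mk_root_notMem (hG : Maximal (IsBucketGraph S r b) G) (hr : IsApex S r c)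
    (hS : GenPos S) (hb : ∀ ⦃v w⦄, chartX r c v ≤ chartX r c w → b v ≤ b w)
    (hv : v ∈ S.erase r) (hvr : s(v, r) ∉ G) :
    ∃ d : Bool → Pt, (hG.prop.drawing hr hS).IsHat v (d false) (d true) ∧
      (∀ i, s(v, d i) ∈ G) ∧ s(d false, d true) ∈ G := by
  obtain ⟨p, q, hpq⟩ := exists_isLowestOver_of_mk_root_notMem hG hr hS hv hvr
  obtain ⟨a, a', hhat, hpa, haq⟩ := hpq.exists_isHat
  have hav := hhat.left_lt
  have hva := hhat.lt_right
  have hpq_eq : b p = b q := (hG.prop.isBucketEdge _ hpq.seg_mem.1).bucket_eq _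
    (Sym2.mem_mk_left _ _) _ (Sym2.mem_mk_right _ _)
    (fun h => hpq.seg_mem.2 (h ▸ Sym2.mem_mk_left _ _))
    (fun h => hpq.seg_mem.2 (h ▸ Sym2.mem_mk_right _ _))
  have hba : b a = b v :=
    (hb hav.le).antisymm ((hb (hva.le.trans haq)).trans (hpq_eq ▸ hb hpa))
  have hba' : b v = b a' :=
    (hb hva.le).antisymm ((hb haq).trans (hpq_eq ▸ hb (hpa.trans hav.le)))
  refine ⟨fun i => bif i then a' else a, hhat, ?_, ?_⟩
  · rintro (_ | _)
    · exact Sym2.eq_swap ▸ mem_of_isFree hG hr hS hhat.left_mem hv hav hba hhat.isFree_left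
    · exact mem_of_isFree hG hr hS hv hhat.right_mem hva hba' hhat.isFree_right
  · exact mem_of_isFree hG hr hS hhat.left_mem hhat.right_mem (hav.trans hva) (hba.trans hba')
      hhat.isFree_top

theorem exists_parentChoices (hG : Maximal (IsBucketGraph S r b) G) (hr : IsApex S r c)
    (hS : GenPos S) (hb : ∀ ⦃v w⦄, chartX r c v ≤ chartX r c w → b v ≤ b w) :
    ∃ d σ, ParentChoices S r G d σ ∧ ∀ v ∈ S.erase r, (∀ i, d i v = r) ∨
      chartX r c (d false v) < chartX r c v ∧ chartX r c v < chartX r c (d true v) := by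
  let U := {v ∈ S.erase r | s(v, r) ∉ G}
  choose! d hhat hedge hseg using fun v (hv : v ∈ U) =>
    exists_hat_of_mk_root_notMem hG hr hS hb (Finset.mem_filter.1 hv).1 (Finset.mem_filter.1 hv).2
  have hmem (v : Pt) (hv : v ∈ U) (i : Bool) : d v i ∈ S.erase r := by
    cases i
    exacts [(hhat v hv).left_mem, (hhat v hv).right_mem]
  have hroot (v : Pt) (hv : v ∈ U) : r ∉ s(d v false, d v true) := by
    simp [(Finset.ne_of_mem_erase (hmem v hv _)).symm]
  have hne (v : Pt) (hv : v ∈ U) : d v false ≠ d v true :=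
    ne_of_apply_ne (chartX r c) ((hhat v hv).left_lt.trans (hhat v hv).lt_right).ne
  obtain ⟨σ, hσ⟩ := UpwardDrawing.exists_rank_of_isHat (c := fun i v => d v i) hhat
    fun v hv => ⟨hseg v hv, hroot v hv⟩
  have hray (v : Pt) (hv : v ∈ S.erase r) (hvU : v ∉ U) : s(v, r) ∈ G := by
    by_contra h
    exact hvU (Finset.mem_filter.2 ⟨hv, h⟩)
  refine ⟨_, _, .of_triangles hr.mem hray hmem hedge hne hseg hσ, fun v _ => ?_⟩
  by_cases hvU : v ∈ U
  · exact .inr (by simpa [hvU] using ⟨(hhat v hvU).left_lt, (hhat v hvU).lt_right⟩)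
  · exact .inl fun i => by simp [hvU]

end BucketGraph

/-! ### Halving the buckets -/

section Halving

variable {S : Finset Pt} {r c v w : Pt} {b : Pt → ℕ} {E : Finset (Sym2 Pt)} {k : ℕ}

/-- The number of points of `S` to the left of `v` in the chart at `r`. -/
def chartRank (S : Finset Pt) (r c v : Pt) : ℕ := {w ∈ S.erase r | chartX r c w < chartX r c v}.card

theorem chartRank_mono (h : chartX r c v ≤ chartX r c w) : chartRank S r c v ≤ chartRank S r c w :=
  Finset.card_le_card (Finset.monotone_filter_right _ fun _ _ h' => h'.trans_le h)

theorem chartRank_lt_chartRank (hv : v ∈ S.erase r) (h : chartX r c v < chartX r c w) :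
    chartRank S r c v < chartRank S r c w := by
  refine Finset.card_lt_card (Finset.ssubset_iff_of_subset ?_ |>.2 ⟨v, ?_, ?_⟩)
  · exact Finset.monotone_filter_right _ fun _ _ h' => h'.trans h
  · exact Finset.mem_filter.2 ⟨hv, h⟩
  · simp

theorem injOn_chartRank (hr : IsApex S r c) (hS : GenPos S) :
    Set.InjOn (chartRank S r c) (S.erase r) := by
  intro v hv w hw h
  by_contra hne
  rcases ((hr.injOn_chartX hS).ne hv hw hne).lt_or_gt with hlt | hlt
  exacts [(chartRank_lt_chartRank hv hlt).ne h, (chartRank_lt_chartRank hw hlt).ne' h]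

theorem chartRank_le_card : chartRank S r c v ≤ S.card :=
  (Finset.card_filter_le _ _).trans Finset.card_erase_le

theorem IsPST.isBucketGraph (hE : IsPST S E) (hb : ∀ v w, b v = b w) :
    IsBucketGraph S r b E :=
  ⟨hE.2.1, fun e he => ⟨(hE.1 e he).1, (hE.1 e he).2, fun _ _ _ _ _ _ => hb _ _⟩⟩

theorem IsPST.eq_starAt (hE : IsPST S E) (hr : r ∈ S) (hb : Set.InjOn b (S.erase r))
    (hbE : IsBucketGraph S r b E) : E = starAt S r := by
  refine Finset.eq_of_subset_of_card_le (fun e he => ?_) ?_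
  · have he' := hbE.isBucketEdge e he
    have hre : r ∈ e := by
      by_contra hre
      induction e using Sym2.ind with | _ p q
      have hp := he'.mem_erase hre (Sym2.mem_mk_left p q)
      have hq := he'.mem_erase hre (Sym2.mem_mk_right p q)
      exact he'.not_isDiag (hb hp hq (he'.bucket_eq p (Sym2.mem_mk_left p q) q
        (Sym2.mem_mk_right p q) (Finset.ne_of_mem_erase hp) (Finset.ne_of_mem_erase hq)))
    obtain ⟨v, rfl⟩ := hre
    exact Finset.mem_image.2 ⟨v, Finset.mem_erase.2 ⟨fun h => he'.not_isDiag h.symm,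
      he'.mem v (Sym2.mem_mk_right r v)⟩, rfl⟩
  · have := hE.2.2.1
    have := Finset.card_erase_add_one hr
    have : (starAt S r).card ≤ (S.erase r).card := Finset.card_image_le
    omega

-- Every vertex is attached to its left candidate if it lies in the left half of its bucket, and to
-- its right candidate otherwise.
theorem exists_reachesIn_three_halved (hr : IsApex S r c) (hS : GenPos S) (hE : IsPST S E)
    (hbE : IsBucketGraph S r (fun v => chartRank S r c v / 2 ^ (k + 1)) E) :
    ∃ E', ReachesIn (SimRotation S) 3 E E' ∧ IsPST S E' ∧
      IsBucketGraph S r (fun v => chartRank S r c v / 2 ^ k) E' := by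
  obtain ⟨G, hEG, hG⟩ := hbE.exists_maximal_superset
  obtain ⟨d, σ, hd, hdX⟩ := exists_parentChoices hG hr hS
    fun v w h => Nat.div_le_div_right (chartRank_mono h)
  let i (v : Pt) : Bool := decide (Odd (chartRank S r c v / 2 ^ k))
  have hsub := hd.parentEdges_select_subset i
  have hE' := (hd.isArborescence_select hr.mem i).isPST hG.prop.noCross hsub
  refine ⟨_, hd.reachesIn_three hr.mem hG.prop.noCross hE hEG i, hE', hE'.2.1, fun e he => ?_⟩
  have heG := hG.prop.isBucketEdge e (hsub he)
  obtain ⟨v, hv, rfl⟩ := Finset.mem_image.1 he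
  refine isBucketEdge_mk (heG.mem v (Sym2.mem_mk_left _ _)) (heG.mem _ (Sym2.mem_mk_right _ _))
    heG.not_isDiag fun hvr hdr => ?_
  have hbucket := heG.bucket_eq v (Sym2.mem_mk_left _ _) _ (Sym2.mem_mk_right _ _) hvr hdr
  simp only [pow_succ, ← Nat.div_div_eq_div_mul] at hbucket
  obtain ⟨hleft, hright⟩ := (hdX v hv).resolve_left fun h => hdr (h _)
  have hleft := Nat.div_le_div_right (c := 2 ^ k) (chartRank_mono (S := S) hleft.le)
  have hright := Nat.div_le_div_right (c := 2 ^ k) (chartRank_mono (S := S) hright.le)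
  by_cases hodd : Odd (chartRank S r c v / 2 ^ k)
  · simp only [i, hodd, decide_true] at hbucket ⊢
    rw [Nat.odd_iff] at hodd
    omega
  · simp only [i, hodd, decide_false] at hbucket ⊢
    rw [Nat.not_odd_iff] at hodd
    omega

theorem reachesIn_starAt_of_isBucketGraph (hr : IsApex S r c) (hS : GenPos S) (hE : IsPST S E)
    (hbE : IsBucketGraph S r (fun v => chartRank S r c v / 2 ^ k) E) :
    ReachesIn (SimRotation S) (3 * k) E (starAt S r) := by
  induction k generalizing E with
  | zero =>
    obtain rfl := hE.eq_starAt hr.mem (by simpa using injOn_chartRank hr hS) hbE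
    exact .refl _
  | succ k ih =>
    obtain ⟨E', hEE', hE', hbE'⟩ := exists_reachesIn_three_halved hr hS hE hbE
    simpa only [mul_add, mul_one, add_comm] using hEE'.trans (ih hE' hbE')

theorem IsPST.reachesIn_starAt (hr : IsApex S r c) (hS : GenPos S) (hE : IsPST S E) :
    ReachesIn (SimRotation S) (3 * (Nat.log 2 S.card + 1)) E (starAt S r) := by
  refine reachesIn_starAt_of_isBucketGraph hr hS hE (hE.isBucketGraph fun v w => ?_)
  have hlt (v : Pt) : chartRank S r c v < 2 ^ (Nat.log 2 S.card + 1) :=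
    chartRank_le_card.trans_lt (Nat.lt_pow_succ_log_self one_lt_two _)
  rw [Nat.div_eq_of_lt (hlt v), Nat.div_eq_of_lt (hlt w)]

end Halving

theorem six_mul_log_add_one_le {n : ℕ} (hn : 2 ≤ n) :
    ((6 * (Nat.log 2 n + 1) : ℕ) : ℝ) ≤ 12 / Real.log 2 * Real.log n := by
  have hlog : (Nat.log 2 n : ℝ) ≤ Real.log n / Real.log 2 := Real.natLog_le_logb n 2
  have hone : (1 : ℝ) ≤ Nat.log 2 n := mod_cast Nat.log_pos one_lt_two hn
  calc ((6 * (Nat.log 2 n + 1) : ℕ) : ℝ) = 6 * (Nat.log 2 n + 1) := by push_cast; ring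
    _ ≤ 12 * (Real.log n / Real.log 2) := by linarith
    _ = 12 / Real.log 2 * Real.log n := by ring

/-- any two noncrossing spanning trees on `n` points in general position are
connected by `O(log n)` simultaneous rotations. -/
theorem stmt_0 :
    ∃ c : ℝ, 0 < c ∧ ∀ n : ℕ, 2 ≤ n → ∀ S : Finset Pt, S.card = n → GenPos S →
      ∀ E E' : Finset (Sym2 Pt), IsPST S E → IsPST S E' →
        ∃ m : ℕ, (m : ℝ) ≤ c * Real.log n ∧ ReachesIn (SimRotation S) m E E' := by
  refine ⟨12 / Real.log 2, by positivity, ?_⟩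
  rintro n hn S rfl hS E E' hE hE'
  obtain ⟨r, c, hr⟩ := exists_isApex (Finset.card_pos.1 (by omega : 0 < S.card))
  have collapse := hE.reachesIn_starAt hr hS
  have expand := (hE'.reachesIn_starAt hr hS).symm
  refine ⟨6 * (Nat.log 2 S.card + 1), six_mul_log_add_one_le hn, ?_⟩
  convert collapse.trans expand using 1
  ring
end
end

section
/- For every set S of n ≥ 6 points in the plane in convex position, there exist two trees T₁, T₂ ∈ 𝒯(S) such that every sequence of simultaneous rotations transforming T₁ into T₂ has length at least 3. -/
open scoped Classical

noncomputable section

/-!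
Number the points counterclockwise `p 0, …, p (n - 1)`. If the chord from `p i` to `p (i + 2)` is
in the first tree, it cuts off the ear with tip `p (i + 1)`, and every tree reached by one
simultaneous rotation can use only the two polygon sides at `p (i + 1)`. Let the first tree contain
two such chords, with tips `p 1` and `p 4`, and let the second tree contain the edge `p 1 p 4`
together with the four polygon sides at `p 1` and `p 4`. After one rotation every edge at `p 1` or
`p 4` is one of these sides, which are all kept, so no edge can be rotated into `p 1 p 4`.
Both trees are double stars.
-/

/-! ### Orientation of triples of points -/

/-- Twice the signed area of the triangle `a b c`: positive exactly when the triangle is traversed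
counterclockwise. -/
def orient (a b c : Pt) : ℝ := (b.1 - a.1) * (c.2 - a.2) - (b.2 - a.2) * (c.1 - a.1)

section Orientation

variable {a b c d : Pt}

lemma orient_rotate (a b c : Pt) : orient a b c = orient b c a := by
  simp only [orient]; ring

lemma orient_swap (a b c : Pt) : orient a c b = -orient a b c := by
  simp only [orient]; ring

lemma orient_self_left (a b : Pt) : orient a a b = 0 := by
  simp [orient]

lemma orient_self_right (a b : Pt) : orient a b b = 0 := by
  simp only [orient]; ring

lemma orient_self_outer (a b : Pt) : orient a b a = 0 := by
  simp [orient]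

lemma orient_eq_add_sub (o a b c : Pt) :
    orient a b c = orient o a b + orient o b c - orient o a c := by
  simp only [orient]; ring

lemma orient_smul_add_smul (a b c d : Pt) {s t : ℝ} (hst : s + t = 1) :
    orient a b (s • c + t • d) = s * orient a b c + t * orient a b d := by
  obtain rfl : s = 1 - t := by linarith
  simp only [orient, Prod.fst_add, Prod.snd_add, Prod.smul_fst, Prod.smul_snd, smul_eq_mul]
  ring

lemma orient_eq_zero_of_mem_segment {x : Pt} (hx : x ∈ segment ℝ a b) : orient a b x = 0 := by
  obtain ⟨s, t, -, -, hst, rfl⟩ := hx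
  rw [orient_smul_add_smul a b a b hst, orient_self_outer, orient_self_right, mul_zero, mul_zero,
    add_zero]

lemma collinear_of_orient_eq_zero (h : orient a b c = 0) : Collinear ℝ ({a, b, c} : Set Pt) := by
  obtain rfl | hab := eq_or_ne a b
  · simpa using collinear_pair ℝ a c
  have hnorm : (b.1 - a.1) ^ 2 + (b.2 - a.2) ^ 2 ≠ 0 := by
    contrapose! hab
    ext <;> nlinarith [sq_nonneg (b.1 - a.1), sq_nonneg (b.2 - a.2)]
  rw [collinear_iff_of_mem (p₀ := a) (by simp)]
  refine ⟨b - a, ?_⟩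
  rintro x (rfl | rfl | rfl)
  · exact ⟨0, by simp⟩
  · exact ⟨1, by simp⟩
  · refine ⟨((b.1 - a.1) * (x.1 - a.1) + (b.2 - a.2) * (x.2 - a.2)) /
      ((b.1 - a.1) ^ 2 + (b.2 - a.2) ^ 2), ?_⟩
    unfold orient at h
    ext
    · simp only [vadd_eq_add, Prod.fst_add, Prod.smul_fst, Prod.fst_sub, smul_eq_mul]
      field_simp
      linear_combination -(b.2 - a.2) * h
    · simp only [vadd_eq_add, Prod.snd_add, Prod.smul_snd, Prod.snd_sub, smul_eq_mul]
      field_simp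
      linear_combination (b.1 - a.1) * h

/-- The weights are the barycentric coordinates of `b` in the triangle `o a c`. -/
lemma mem_convexHull_of_orient {o : Pt} (hab : 0 ≤ orient o a b) (hbc : 0 ≤ orient o b c)
    (hac : 0 < orient o a c) (habc : orient a b c ≤ 0) :
    b ∈ convexHull ℝ ({o, a, c} : Set Pt) := by
  have hsum := orient_eq_add_sub o a b c
  refine mem_convexHull_of_exists_fintype
    ![-orient a b c / orient o a c, orient o b c / orient o a c, orient o a b / orient o a c]
    ![o, a, c] ?_ ?_ ?_ ?_
  · intro i
    fin_cases i
    exacts [div_nonneg (neg_nonneg.2 habc) hac.le, div_nonneg hbc hac.le, div_nonneg hab hac.le]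
  · simp only [Fin.sum_univ_three, Matrix.cons_val]
    field_simp
    linarith
  · intro i
    fin_cases i <;> simp
  · simp only [Fin.sum_univ_three, Matrix.cons_val]
    ext
    · simp only [Prod.fst_add, Prod.smul_fst, smul_eq_mul]
      field_simp
      simp only [orient]; ring
    · simp only [Prod.snd_add, Prod.smul_snd, smul_eq_mul]
      field_simp
      simp only [orient]; ring

lemma noCrossPair_of_orient_pos (hc : c ∈ s(a, b) ∨ 0 < orient a b c) (hd : 0 < orient a b d) :
    NoCrossPair s(a, b) s(c, d) := by
  rintro x ⟨hxab, hxcd⟩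
  have hx : orient a b x = 0 := orient_eq_zero_of_mem_segment hxab
  obtain ⟨s, t, hs, ht, hst, rfl⟩ : x ∈ segment ℝ c d := hxcd
  have hc_nonneg : 0 ≤ orient a b c := by
    rcases hc with hc | hc
    · rcases Sym2.mem_iff.1 hc with rfl | rfl
      exacts [(orient_self_outer c b).ge, (orient_self_right a c).ge]
    · exact hc.le
  rw [orient_smul_add_smul a b c d hst] at hx
  obtain rfl : t = 0 := by
    by_contra ht'
    have : 0 < t * orient a b d := mul_pos (ht.lt_of_ne' ht') hd
    nlinarith [mul_nonneg hs hc_nonneg]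
  obtain rfl : s = 1 := by linarith
  have hc_mem : c ∈ s(a, b) := hc.resolve_right (by linarith)
  simpa [epts] using hc_mem

lemma segment_inter_segment_nonempty (habc : 0 < orient a b c) (habd : 0 < orient a b d)
    (hacd : 0 < orient a c d) (hbcd : 0 < orient b c d) :
    (segment ℝ a c ∩ segment ℝ b d).Nonempty := by
  have hsum := orient_eq_add_sub a b c d
  -- The areas cut off by the diagonals give the ratios in which they divide each other.
  set A := orient a b c + orient a c d
  have hA_pos : 0 < A := by linarith
  refine ⟨(orient b c d / A) • a + (orient a b d / A) • c,
    ⟨_, _, by positivity, by positivity, ?_, rfl⟩,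
    ⟨orient a c d / A, orient a b c / A, by positivity, by positivity, ?_, ?_⟩⟩
  · field_simp
    linarith
  · field_simp
    linarith
  · ext
    · simp only [Prod.fst_add, Prod.smul_fst, smul_eq_mul]
      field_simp
      simp only [orient]; ring
    · simp only [Prod.snd_add, Prod.smul_snd, smul_eq_mul]
      field_simp
      simp only [orient]; ring

lemma not_noCrossPair_of_orient_pos (habc : 0 < orient a b c) (habd : 0 < orient a b d)
    (hacd : 0 < orient a c d) (hbcd : 0 < orient b c d) : ¬ NoCrossPair s(a, c) s(b, d) := by
  intro hno
  obtain ⟨x, hxac, hxbd⟩ := segment_inter_segment_nonempty habc habd hacd hbcd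
  obtain ⟨hx, hx'⟩ := hno ⟨hxac, hxbd⟩
  rcases Sym2.mem_iff.1 hx with rfl | rfl <;> rcases Sym2.mem_iff.1 hx' with rfl | rfl
  · exact habc.ne' (orient_self_left _ _)
  · exact habd.ne' (orient_self_outer _ _)
  · exact habc.ne' (orient_self_right _ _)
  · exact hacd.ne' (orient_self_right _ _)

end Orientation

/-! ### Counterclockwise enumeration of a set in convex position -/

/-- `p 0, …, p (n - 1)` are the vertices of a strictly convex polygon in counterclockwise order. -/
def CcwPolygon (n : ℕ) (p : ℕ → Pt) : Prop :=
  ∀ ⦃i j k : ℕ⦄, i < j → j < k → k < n → 0 < orient (p i) (p j) (p k)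

lemma exists_strictMonoOn_comp_enumeration {α β : Type*} [Nonempty α] [DecidableEq α]
    [LinearOrder β] (s : Finset α) {f : α → β} (hf : Set.InjOn f s) :
    ∃ q : ℕ → α, (Finset.range s.card).image q = s ∧ StrictMonoOn (f ∘ q) (Set.Iio s.card) := by
  induction s using Finset.induction_on_max_value f with
  | empty => exact ⟨fun _ => Classical.arbitrary α, by simp, fun i hi => by simp at hi⟩
  | insert a s ha hmax ih =>
    obtain ⟨q, hq, hmono⟩ := ih (hf.mono (by simp))
    have hq_mem : ∀ i < s.card, q i ∈ s := fun i hi =>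
      hq ▸ Finset.mem_image_of_mem q (Finset.mem_range.2 hi)
    have hlt : ∀ x ∈ s, f x < f a := fun x hx =>
      (hmax x hx).lt_of_ne fun h =>
        ha (hf (by simp [hx]) (by simp) h ▸ hx)
    refine ⟨fun i => if i < s.card then q i else a, ?_, ?_⟩
    · rw [Finset.card_insert_of_notMem ha, Finset.range_add_one, Finset.image_insert]
      simp only [lt_self_iff_false, if_false]
      congr 1
      exact (Finset.image_congr fun i hi => if_pos (Finset.mem_range.1 hi)).trans hq
    · intro i hi j hj hij
      simp only [Finset.card_insert_of_notMem ha, Set.mem_Iio] at hi hj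
      have hi' : i < s.card := by omega
      simp only [Function.comp_apply, if_pos hi']
      split_ifs with hj'
      · exact hmono hi' hj' hij
      · exact hlt _ (hq_mem i hi')

/-- A line strictly separating `a` from `s` confines `s` to an open half-plane, where the slope
relative to that line orders the directions seen from `a`. -/
lemma exists_radial_key {a : Pt} {s : Set Pt} (hs : s.Finite) (ha : a ∉ convexHull ℝ s) :
    ∃ key : Pt → ℝ, ∀ x ∈ s, ∀ y ∈ s, key x < key y ↔ 0 < orient a x y := by
  obtain ⟨f, u, hfa, hfs⟩ := geometric_hahn_banach_point_closed (convex_convexHull ℝ s)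
    (hs.isCompact_convexHull ℝ).isClosed ha
  have hf : ∀ x : Pt, f x = f (1, 0) * x.1 + f (0, 1) * x.2 := fun x => by
    have hx : x = x.1 • ((1, 0) : Pt) + x.2 • ((0, 1) : Pt) := by ext <;> simp
    rw [congrArg f hx, map_add, map_smul, map_smul, smul_eq_mul, smul_eq_mul]
    ring
  have hpos : ∀ x ∈ s, 0 < f (x - a) := fun x hx => by
    rw [map_sub, sub_pos]
    exact hfa.trans (hfs x (subset_convexHull ℝ s hx))
  let g : Pt → ℝ := fun v => f (v.2, -v.1)
  have hcross : ∀ x y, f (x - a) * g (y - a) - g (x - a) * f (y - a) =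
      (f (1, 0) ^ 2 + f (0, 1) ^ 2) * orient a x y := fun x y => by
    simp only [g, hf (x - a), hf (y - a), hf (_, -(x - a).1), hf (_, -(y - a).1), orient,
      Prod.fst_sub, Prod.snd_sub]
    ring
  refine ⟨fun x => g (x - a) / f (x - a), fun x hx y hy => ?_⟩
  have hnorm : 0 < f (1, 0) ^ 2 + f (0, 1) ^ 2 := by
    by_contra hle
    have h10 : f (1, 0) = 0 := by nlinarith [sq_nonneg (f (1, 0)), sq_nonneg (f (0, 1))]
    have h01 : f (0, 1) = 0 := by nlinarith [sq_nonneg (f (1, 0)), sq_nonneg (f (0, 1))]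
    have := hpos x hx
    rw [hf, h10, h01] at this
    linarith
  rw [div_lt_div_iff₀ (hpos x hx) (hpos y hy), ← mul_pos_iff_of_pos_left hnorm, ← hcross, sub_pos,
    mul_comm (f (x - a))]

lemma GenPos.orient_ne_zero {S : Finset Pt} (hS : GenPos S) {a b c : Pt} (ha : a ∈ S) (hb : b ∈ S)
    (hc : c ∈ S) (hab : a ≠ b) (hac : a ≠ c) (hbc : b ≠ c) : orient a b c ≠ 0 :=
  fun h => hS a ha b hb c hc hab hac hbc (collinear_of_orient_eq_zero h)

lemma ConvexPos.orient_pos {S : Finset Pt} (hS : ConvexPos S) {o a b c : Pt} (ho : o ∈ S)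
    (ha : a ∈ S) (hb : b ∈ S) (hc : c ∈ S) (hab : 0 < orient o a b) (hbc : 0 < orient o b c)
    (hac : 0 < orient o a c) : 0 < orient a b c := by
  by_contra hle
  refine hS b hb (convexHull_mono ?_
    (mem_convexHull_of_orient hab.le hbc.le hac (not_lt.1 hle)))
  rintro x (rfl | rfl | rfl)
  · exact ⟨ho, fun h => hbc.ne' (h ▸ orient_self_left _ _)⟩
  · exact ⟨ha, fun h => hab.ne' (h ▸ orient_self_right _ _)⟩
  · exact ⟨hc, fun h => hbc.ne' (h ▸ orient_self_right _ _)⟩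

lemma exists_radial_enumeration {S : Finset Pt} (hg : GenPos S) (hc : ConvexPos S) {o : Pt}
    (ho : o ∈ S) : ∃ q : ℕ → Pt, (Finset.range (S.erase o).card).image q = S.erase o ∧
      ∀ i j, i < j → j < (S.erase o).card → 0 < orient o (q i) (q j) := by
  obtain ⟨key, hkey⟩ := exists_radial_key (S.finite_toSet.subset Set.sdiff_subset) (hc o ho)
  rw [← Finset.coe_erase] at hkey
  have hinj : Set.InjOn key (S.erase o) := fun x hx y hy hxy => by
    by_contra hne
    obtain ⟨hxo, hxS⟩ := Finset.mem_erase.1 hx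
    obtain ⟨hyo, hyS⟩ := Finset.mem_erase.1 hy
    have hxy_le := mt (hkey x hx y hy).2 hxy.not_lt
    have hyx_le := mt (hkey y hy x hx).2 hxy.not_gt
    rw [orient_swap] at hyx_le
    exact hg.orient_ne_zero ho hxS hyS hxo.symm hyo.symm hne (by linarith)
  obtain ⟨q, hq, hmono⟩ := exists_strictMonoOn_comp_enumeration _ hinj
  have hq_mem : ∀ i < (S.erase o).card, q i ∈ S.erase o := fun i hi =>
    hq ▸ Finset.mem_image_of_mem q (Finset.mem_range.2 hi)
  exact ⟨q, hq, fun i j hij hj => (hkey _ (hq_mem i (hij.trans hj)) _ (hq_mem j hj)).1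
    (hmono (hij.trans hj) hj hij)⟩

theorem exists_ccwPolygon {S : Finset Pt} (hg : GenPos S) (hc : ConvexPos S) :
    ∃ p : ℕ → Pt, CcwPolygon S.card p ∧ (Finset.range S.card).image p = S := by
  obtain rfl | ⟨o, ho⟩ := S.eq_empty_or_nonempty
  · exact ⟨fun _ => 0, fun _ _ _ _ _ hk => by simp at hk, by simp⟩
  obtain ⟨q, hq, hpos⟩ := exists_radial_enumeration hg hc ho
  have hq_mem : ∀ i < (S.erase o).card, q i ∈ S := fun i hi =>
    Finset.mem_of_mem_erase (hq ▸ Finset.mem_image_of_mem q (Finset.mem_range.2 hi))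
  rw [← Finset.card_erase_add_one ho]
  refine ⟨fun i => i.casesOn o q, ?_, ?_⟩
  · rintro (_ | i) (_ | j) (_ | k) hij hjk hk <;> try omega
    · exact hpos j k (by omega) (by omega)
    · exact hc.orient_pos ho (hq_mem i (by omega)) (hq_mem j (by omega)) (hq_mem k (by omega))
        (hpos i j (by omega) (by omega)) (hpos j k (by omega) (by omega))
        (hpos i k (by omega) (by omega))
  · rw [Finset.range_add_one', Finset.image_insert, Finset.map_eq_image, Finset.image_image]
    exact (congrArg (insert o) hq).trans (Finset.insert_erase ho)

/-! ### Chords of a convex polygon -/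

/-- The indices `i`, `j`, `k` are distinct and met in this cyclic order when counting upwards. -/
def CyclicLT (i j k : ℕ) : Prop := i < j ∧ j < k ∨ j < k ∧ k < i ∨ k < i ∧ i < j

lemma eq_or_eq_or_cyclicLT_or_cyclicLT {i j : ℕ} (hij : i ≠ j) (k : ℕ) :
    k = i ∨ k = j ∨ CyclicLT i j k ∨ CyclicLT j i k := by
  unfold CyclicLT; omega

/-- The indices `k` and `l` lie strictly on opposite sides of the chord `i j`, so that the ends of
the chords `i j` and `k l` alternate in the cyclic order. -/
def Interlaced (i j k l : ℕ) : Prop :=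
  CyclicLT i j k ∧ CyclicLT j i l ∨ CyclicLT i j l ∧ CyclicLT j i k

lemma Interlaced.symm {i j k l : ℕ} (h : Interlaced i j k l) : Interlaced k l i j := by
  unfold Interlaced CyclicLT at *; omega

lemma not_interlaced_of_common_end (i j k : ℕ) : ¬ Interlaced i k j k := by
  unfold Interlaced CyclicLT; omega

namespace CcwPolygon

variable {n : ℕ} {p : ℕ → Pt} {i j k l : ℕ}

lemma orient_pos (hp : CcwPolygon n p) (h : CyclicLT i j k) (hi : i < n) (hj : j < n)
    (hk : k < n) : 0 < orient (p i) (p j) (p k) := by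
  rcases h with ⟨hij, hjk⟩ | ⟨hjk, hki⟩ | ⟨hki, hij⟩
  · exact hp hij hjk hk
  · exact orient_rotate (p i) _ _ ▸ hp hjk hki hi
  · exact orient_rotate (p k) _ _ ▸ hp hki hij hj

lemma injOn (hp : CcwPolygon n p) (hn : 3 ≤ n) : Set.InjOn p (Set.Iio n) := by
  intro i hi j hj hij
  by_contra hne
  obtain ⟨k, hk, hki, hkj⟩ : ∃ k < n, k ≠ i ∧ k ≠ j := by
    by_contra! h
    have h0 := h 0; have h1 := h 1; have h2 := h 2
    omega
  rcases eq_or_eq_or_cyclicLT_or_cyclicLT hne k with rfl | rfl | h | h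
  · exact hki rfl
  · exact hkj rfl
  · exact (hp.orient_pos h hi hj hk).ne' (hij ▸ orient_self_left _ _)
  · exact (hp.orient_pos h hj hi hk).ne' (hij ▸ orient_self_left _ _)

lemma noCrossPair_of_cyclicLT (hp : CcwPolygon n p) (hi : i < n) (hj : j < n) (hk : k < n)
    (hl : l < n) (hijk : k = i ∨ k = j ∨ CyclicLT i j k) (hijl : CyclicLT i j l) :
    NoCrossPair s(p i, p j) s(p k, p l) := by
  refine noCrossPair_of_orient_pos ?_ (hp.orient_pos hijl hi hj hl)
  rcases hijk with rfl | rfl | h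
  · exact .inl (Sym2.mem_mk_left _ _)
  · exact .inl (Sym2.mem_mk_right _ _)
  · exact .inr (hp.orient_pos h hi hj hk)

lemma not_noCrossPair_of_cyclicLT (hp : CcwPolygon n p) (hi : i < n) (hj : j < n) (hk : k < n)
    (hl : l < n) (hjik : CyclicLT j i k) (hijl : CyclicLT i j l) :
    ¬ NoCrossPair s(p i, p j) s(p k, p l) := by
  refine not_noCrossPair_of_orient_pos (hp.orient_pos ?_ hi hk hj) (hp.orient_pos ?_ hi hk hl)
    (hp.orient_pos hijl hi hj hl) (hp.orient_pos ?_ hk hj hl) <;>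
  · unfold CyclicLT at *; omega

theorem noCrossPair_iff (hp : CcwPolygon n p) (hi : i < n) (hj : j < n) (hk : k < n) (hl : l < n)
    (hij : i ≠ j) (hkl : k ≠ l) (hne : s(i, j) ≠ s(k, l)) :
    NoCrossPair s(p i, p j) s(p k, p l) ↔ ¬ Interlaced i j k l := by
  constructor
  · rintro hno (⟨hijk, hjil⟩ | ⟨hijl, hjik⟩)
    · rw [Sym2.eq_swap (a := p k)] at hno
      exact hp.not_noCrossPair_of_cyclicLT hi hj hl hk hjil hijk hno
    · exact hp.not_noCrossPair_of_cyclicLT hi hj hk hl hjik hijl hno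
  · intro hint
    have hside :
        (k = i ∨ k = j ∨ CyclicLT i j k) ∧ CyclicLT i j l ∨
        (l = i ∨ l = j ∨ CyclicLT i j l) ∧ CyclicLT i j k ∨
        (k = j ∨ k = i ∨ CyclicLT j i k) ∧ CyclicLT j i l ∨
        (l = j ∨ l = i ∨ CyclicLT j i l) ∧ CyclicLT j i k := by
      have hk_side := eq_or_eq_or_cyclicLT_or_cyclicLT hij k
      have hl_side := eq_or_eq_or_cyclicLT_or_cyclicLT hij l
      simp only [ne_eq, Sym2.eq_iff] at hne
      unfold Interlaced at hint
      grind
    rcases hside with ⟨h, h'⟩ | ⟨h, h'⟩ | ⟨h, h'⟩ | ⟨h, h'⟩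
    · exact hp.noCrossPair_of_cyclicLT hi hj hk hl h h'
    · rw [Sym2.eq_swap (a := p k)]
      exact hp.noCrossPair_of_cyclicLT hi hj hl hk h h'
    · rw [Sym2.eq_swap (a := p i)]
      exact hp.noCrossPair_of_cyclicLT hj hi hk hl h h'
    · rw [Sym2.eq_swap (a := p i), Sym2.eq_swap (a := p k)]
      exact hp.noCrossPair_of_cyclicLT hj hi hl hk h h'

end CcwPolygon

/-! ### Double stars -/

/-- The edge set of the tree on `p 0, …, p (n - 1)` in which the vertices with index in `L` are
joined to `p b` and all others to `p a`. It is a double star with centres `p a` and `p b` when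
`b ∉ L`. -/
def doubleStar (n : ℕ) (p : ℕ → Pt) (a b : ℕ) (L : Finset ℕ) : Finset (Sym2 Pt) :=
  ((Finset.range n).erase a).image fun k => s(p k, p (if k ∈ L then b else a))

section DoubleStar

variable {n : ℕ} {p : ℕ → Pt} {a b k : ℕ} {L : Finset ℕ}

lemma mem_doubleStar {e : Sym2 Pt} :
    e ∈ doubleStar n p a b L ↔
      ∃ k < n, k ≠ a ∧ s(p k, p (if k ∈ L then b else a)) = e := by
  simp only [doubleStar, Finset.mem_image, Finset.mem_erase, Finset.mem_range]
  grind

lemma mk_mem_doubleStar_of_mem (hk : k < n) (hka : k ≠ a) (hkL : k ∈ L) :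
    s(p k, p b) ∈ doubleStar n p a b L :=
  mem_doubleStar.2 ⟨k, hk, hka, by rw [if_pos hkL]⟩

lemma mk_mem_doubleStar_of_notMem (hk : k < n) (hka : k ≠ a) (hkL : k ∉ L) :
    s(p k, p a) ∈ doubleStar n p a b L :=
  mem_doubleStar.2 ⟨k, hk, hka, by rw [if_neg hkL]⟩

lemma card_doubleStar (hp : Set.InjOn p (Set.Iio n)) (ha : a < n) (hb : b < n) (hbL : b ∉ L) :
    (doubleStar n p a b L).card + 1 = n := by
  rw [doubleStar, Finset.card_image_of_injOn, Finset.card_erase_add_one (Finset.mem_range.2 ha),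
    Finset.card_range]
  intro k hk l hl hkl
  simp only [Finset.coe_erase, Finset.coe_range, Set.mem_sdiff, Set.mem_singleton_iff] at hk hl
  have hcentre : ∀ m, (if m ∈ L then b else a) ∈ Set.Iio n := fun m => by
    split_ifs <;> assumption
  rcases Sym2.eq_iff.1 hkl with ⟨h, -⟩ | ⟨h, h'⟩
  · exact hp hk.1 hl.1 h
  · have hkc := hp hk.1 (hcentre l) h
    have hlc := hp (hcentre k) hl.1 h'
    grind

lemma reflTransGen_doubleStar (hb : b < n) (hab : a ≠ b) (hbL : b ∉ L) (hk : k < n) :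
    Relation.ReflTransGen (fun x y => s(x, y) ∈ doubleStar n p a b L) (p k) (p a) := by
  have hba : s(p b, p a) ∈ doubleStar n p a b L := mk_mem_doubleStar_of_notMem hb hab.symm hbL
  obtain rfl | hka := eq_or_ne k a
  · exact .refl
  by_cases hkL : k ∈ L
  · exact .head (mk_mem_doubleStar_of_mem hk hka hkL) (.single hba)
  · exact .single (mk_mem_doubleStar_of_notMem hk hka hkL)

lemma CcwPolygon.noCross_doubleStar (hp : CcwPolygon n p) (ha : a < n) (hb : b < n) (hbL : b ∉ L)
    (hL : ∀ k ∈ L, ∀ m ∉ L, ¬ Interlaced k b m a) : NoCross (doubleStar n p a b L) := by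
  intro e he f hf hef
  obtain ⟨k, hk, hka, rfl⟩ := mem_doubleStar.1 he
  obtain ⟨l, hl, hla, rfl⟩ := mem_doubleStar.1 hf
  have hcentre : ∀ m, (if m ∈ L then b else a) < n := fun m => by split_ifs <;> assumption
  have hne : ∀ m, m ≠ a → m ≠ if m ∈ L then b else a := by grind
  refine (hp.noCrossPair_iff hk (hcentre k) hl (hcentre l) (hne k hka) (hne l hla) ?_).2 ?_
  · exact fun h => hef (congrArg (Sym2.map p) h)
  · split_ifs with hkL hlL hlL
    · exact not_interlaced_of_common_end k l b
    · exact hL k hkL l hlL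
    · exact fun h => hL l hlL k hkL h.symm
    · exact not_interlaced_of_common_end k l a

theorem CcwPolygon.isPST_doubleStar (hp : CcwPolygon n p) (hn : 3 ≤ n) (ha : a < n) (hb : b < n)
    (hab : a ≠ b) (hbL : b ∉ L) (hL : ∀ k ∈ L, ∀ m ∉ L, ¬ Interlaced k b m a) :
    IsPST ((Finset.range n).image p) (doubleStar n p a b L) := by
  have hinj := hp.injOn hn
  refine ⟨?_, hp.noCross_doubleStar ha hb hbL hL, ?_, ?_⟩
  · intro e he
    obtain ⟨k, hk, hka, rfl⟩ := mem_doubleStar.1 he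
    have hcentre : (if k ∈ L then b else a) < n := by split_ifs <;> assumption
    refine ⟨fun h => ?_, fun x hx => ?_⟩
    · have := hinj hk hcentre h
      grind
    · rcases Sym2.mem_iff.1 hx with rfl | rfl
      exacts [Finset.mem_image_of_mem p (Finset.mem_range.2 hk),
        Finset.mem_image_of_mem p (Finset.mem_range.2 hcentre)]
  · rw [card_doubleStar hinj ha hb hbL, Finset.card_image_of_injOn (by simpa using hinj),
      Finset.card_range]
  · simp only [Finset.forall_mem_image, Finset.mem_range]
    intro i hi j hj
    have : Std.Symm fun x y => s(x, y) ∈ doubleStar n p a b L :=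
      ⟨fun x y h => Sym2.eq_swap ▸ h⟩
    exact (reflTransGen_doubleStar hb hab hbL hi).trans
      (Std.Symm.symm _ _ (reflTransGen_doubleStar hb hab hbL hj))

end DoubleStar

/-! ### Obstruction to short rotation sequences -/

/-- No edge of `E` crosses an edge of `F`; an edge lying in both sets is not compared with
itself. -/
def Compatible (E F : Finset (Sym2 Pt)) : Prop := ∀ e ∈ E, ∀ f ∈ F, e ≠ f → NoCrossPair e f

lemma SimRotation.compatible {S : Finset Pt} {E₁ E₂ : Finset (Sym2 Pt)}
    (h : SimRotation S E₁ E₂) : Compatible E₂ E₁ := by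
  obtain ⟨hE₁, -, π, hπ, hrot⟩ := h
  intro e he f hf hef
  by_cases heE₁ : e ∈ E₁
  · exact hE₁.2.1 e heE₁ f hf hef
  · obtain ⟨e', he', rfl⟩ := hπ.surjOn (Finset.mem_coe.2 (Finset.mem_sdiff.2 ⟨he, heE₁⟩))
    exact (hrot e' (Finset.mem_coe.1 he')).2 f hf

lemma not_simRotation_of_adjacent_subset {S : Finset Pt} {T E : Finset (Sym2 Pt)} {g : Sym2 Pt}
    (hgE : g ∈ E) (hgT : g ∉ T) (hadj : ∀ e ∈ T, ∀ x ∈ e, x ∈ g → e ∈ E) :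
    ¬ SimRotation S T E := by
  rintro ⟨-, -, π, hπ, hrot⟩
  obtain ⟨e, he, rfl⟩ := hπ.surjOn (Finset.mem_coe.2 (Finset.mem_sdiff.2 ⟨hgE, hgT⟩))
  obtain ⟨⟨x, hxe, hxg⟩, -⟩ := hrot e he
  obtain ⟨heT, heE⟩ := Finset.mem_sdiff.1 (Finset.mem_coe.1 he)
  exact heE (hadj e heT x hxe hxg)

theorem three_le_of_adjacent_subset_erase {S : Finset Pt} {E₁ E₂ : Finset (Sym2 Pt)} {g : Sym2 Pt}
    (hE₁ : IsPST S E₁) (hg : g ∈ E₂)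
    (hadj : ∀ T, IsPST S T → Compatible T E₁ → ∀ e ∈ T, ∀ x ∈ e, x ∈ g → e ∈ E₂.erase g)
    {k : ℕ} {f : ℕ → Finset (Sym2 Pt)} (h0 : f 0 = E₁) (hk : f k = E₂)
    (hf : ∀ i < k, SimRotation S (f i) (f (i + 1))) : 3 ≤ k := by
  have hgT : ∀ T, IsPST S T → Compatible T E₁ → g ∉ T := fun T hT hTE₁ hg =>
    Finset.notMem_erase g E₂ (hadj T hT hTE₁ g hg _ g.out_fst_mem g.out_fst_mem)
  have hnot : ∀ T, IsPST S T → Compatible T E₁ → ¬ SimRotation S T E₂ := fun T hT hTE₁ =>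
    not_simRotation_of_adjacent_subset hg (hgT T hT hTE₁) fun e he x hxe hxg =>
      Finset.mem_of_mem_erase (hadj T hT hTE₁ e he x hxe hxg)
  by_contra! hlt
  interval_cases k
  · exact hgT E₁ hE₁ hE₁.2.1 (h0 ▸ hk ▸ hg)
  · exact hnot E₁ hE₁ hE₁.2.1 (h0 ▸ hk ▸ hf 0 one_pos)
  · have hstep : SimRotation S E₁ (f 1) := h0 ▸ hf 0 two_pos
    exact hnot (f 1) hstep.2.1 hstep.compatible (hk ▸ hf 1 one_lt_two)

lemma CcwPolygon.eq_side_of_mem_ear_tip {n : ℕ} {p : ℕ → Pt} (hp : CcwPolygon n p) {i : ℕ}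
    (hi : i + 2 < n) {e : Sym2 Pt} (hdiag : ¬ e.IsDiag)
    (hends : ∀ x ∈ e, x ∈ (Finset.range n).image p) (htip : p (i + 1) ∈ e)
    (hear : e ≠ s(p i, p (i + 2)) → NoCrossPair e s(p i, p (i + 2))) :
    ∃ m, (m = i ∨ m = i + 1) ∧ e = s(p m, p (m + 1)) := by
  have hinj := hp.injOn (by omega)
  obtain ⟨x, rfl⟩ := htip
  obtain ⟨j, hj, rfl⟩ := Finset.mem_image.1 (hends x (Sym2.mem_mk_right _ _))
  rw [Finset.mem_range] at hj
  have hne : s(p (i + 1), p j) ≠ s(p i, p (i + 2)) := fun h => by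
    rcases Sym2.mem_iff.1 (h ▸ Sym2.mem_mk_left (p (i + 1)) (p j)) with h | h
    · have := hinj (show i + 1 < n by omega) (show i < n by omega) h
      omega
    · have := hinj (show i + 1 < n by omega) hi h
      omega
  have hj_ne : i + 1 ≠ j := fun h => hdiag (by simp [h])
  have hint := (hp.noCrossPair_iff (by omega) hj (by omega) hi hj_ne (by omega)
    fun h => hne (congrArg (Sym2.map p) h)).1 (hear hne)
  obtain rfl | rfl : j = i ∨ j = i + 2 := by
    unfold Interlaced CyclicLT at hint
    omega
  exacts [⟨j, .inl rfl, Sym2.eq_swap⟩, ⟨i + 1, .inr rfl, rfl⟩]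

theorem CcwPolygon.three_le_of_ears {n : ℕ} {p : ℕ → Pt} (hp : CcwPolygon n p) {i j : ℕ}
    (hij : i + 2 ≤ j) (hj : j + 2 < n) {E₁ E₂ : Finset (Sym2 Pt)}
    (hE₁ : IsPST ((Finset.range n).image p) E₁) (hear_i : s(p i, p (i + 2)) ∈ E₁)
    (hear_j : s(p j, p (j + 2)) ∈ E₁) (htips : s(p (i + 1), p (j + 1)) ∈ E₂)
    (hsides : ∀ m, m = i ∨ m = i + 1 ∨ m = j ∨ m = j + 1 → s(p m, p (m + 1)) ∈ E₂)
    {k : ℕ} {f : ℕ → Finset (Sym2 Pt)} (h0 : f 0 = E₁) (hk : f k = E₂)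
    (hf : ∀ l < k, SimRotation ((Finset.range n).image p) (f l) (f (l + 1))) : 3 ≤ k := by
  refine three_le_of_adjacent_subset_erase hE₁ htips ?_ h0 hk hf
  intro T hT hTE₁ e he x hxe hxtip
  obtain ⟨hdiag, hends⟩ := hT.1 e he
  obtain ⟨m, hm, rfl⟩ :
      ∃ m, (m = i ∨ m = i + 1 ∨ m = j ∨ m = j + 1) ∧ e = s(p m, p (m + 1)) := by
    rcases Sym2.mem_iff.1 hxtip with rfl | rfl
    · obtain ⟨m, hm, hem⟩ :=
        hp.eq_side_of_mem_ear_tip (by omega) hdiag hends hxe (hTE₁ e he _ hear_i)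
      exact ⟨m, by omega, hem⟩
    · obtain ⟨m, hm, hem⟩ :=
        hp.eq_side_of_mem_ear_tip hj hdiag hends hxe (hTE₁ e he _ hear_j)
      exact ⟨m, by omega, hem⟩
  refine Finset.mem_erase.2 ⟨fun h => ?_, hsides m hm⟩
  have hinj := hp.injOn (by omega)
  have hm_lt : m ∈ Set.Iio n ∧ m + 1 ∈ Set.Iio n := by
    simp only [Set.mem_Iio]; omega
  have htips_lt : i + 1 ∈ Set.Iio n ∧ j + 1 ∈ Set.Iio n := by
    simp only [Set.mem_Iio]; omega
  rcases Sym2.eq_iff.1 h with ⟨hmi, hmj⟩ | ⟨hmj, hmi⟩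
  · have := hinj hm_lt.1 htips_lt.1 hmi
    have := hinj hm_lt.2 htips_lt.2 hmj
    omega
  · have := hinj hm_lt.1 htips_lt.2 hmj
    have := hinj hm_lt.2 htips_lt.1 hmi
    omega

/-- on `n ≥ 6` points in convex position there are two trees at simultaneous
rotation distance at least `3`. -/
theorem stmt_1 :
    ∀ n : ℕ, 6 ≤ n → ∀ S : Finset Pt, S.card = n → GenPos S → ConvexPos S →
      ∃ E₁ E₂ : Finset (Sym2 Pt), IsPST S E₁ ∧ IsPST S E₂ ∧
        ∀ (k : ℕ) (f : ℕ → Finset (Sym2 Pt)), f 0 = E₁ → f k = E₂ →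
          (∀ i < k, SimRotation S (f i) (f (i + 1))) → 3 ≤ k := by
  rintro n hn S rfl hg hc
  obtain ⟨p, hp, hpS⟩ := exists_ccwPolygon hg hc
  generalize S.card = n at *
  subst hpS
  have hE₁ : IsPST _ (doubleStar n p 0 3 {4, 5}) := hp.isPST_doubleStar (by omega) (by omega)
    (by omega) (by omega) (by simp) (by grind [Interlaced, CyclicLT])
  have hE₂ : IsPST _ (doubleStar n p 4 1 {0, 2}) := hp.isPST_doubleStar (by omega) (by omega)
    (by omega) (by omega) (by simp) (by grind [Interlaced, CyclicLT])
  refine ⟨_, _, hE₁, hE₂, fun k f =>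
    hp.three_le_of_ears (i := 0) (j := 3) (by omega) (by omega) hE₁ ?_ ?_ ?_ ?_⟩
  · exact Sym2.eq_swap ▸ mk_mem_doubleStar_of_notMem (k := 2) (by omega) (by omega) (by simp)
  · exact Sym2.eq_swap ▸ mk_mem_doubleStar_of_mem (k := 5) (by omega) (by omega) (by simp)
  · exact mk_mem_doubleStar_of_notMem (by omega) (by omega) (by simp)
  · rintro m (rfl | rfl | rfl | rfl)
    · exact mk_mem_doubleStar_of_mem (by omega) (by omega) (by simp)
    · exact Sym2.eq_swap ▸ mk_mem_doubleStar_of_mem (k := 2) (by omega) (by omega) (by simp)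
    · exact mk_mem_doubleStar_of_notMem (by omega) (by omega) (by simp)
    · exact Sym2.eq_swap ▸ mk_mem_doubleStar_of_notMem (k := 5) (by omega) (by omega) (by simp)
end
end
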